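/- arXiv:1506.06688 — 2 statements merged into one kernel-verified Lean document; each statement's English description precedes it below -/
import Mathlib

section
/- For every real number γ ≥ 2 + √5 and every ε > 0, there exists a matrix M with entries in {0, 1, −1} such that the growth rate gr(Grid(M)) = lim_{n→∞} |Grid_n(M)|^{1/n} exists and |gr(Grid(M)) − γ| < ε. -/
noncomputable section
open Filter
open scoped Classical
/-- The point `p` (0-based) of the permutation `σ` lies in the cell `(i, j)` of the gridding
determined by the column dividers `c` and row dividers `r`. -/
def InCell {t u k : ℕ} (σ : Equiv.Perm (Fin k)) (c : Fin (t + 1) → ℕ) (r : Fin (u + 1) → ℕ)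
    (i : Fin t) (j : Fin u) (p : Fin k) : Prop :=
  c i.castSucc ≤ (p : ℕ) ∧ (p : ℕ) < c i.succ ∧
    r j.castSucc ≤ (σ p : ℕ) ∧ (σ p : ℕ) < r j.succ

/-- `c`, `r` form an `M`-gridding of the permutation `σ`. -/
def IsGridding {t u k : ℕ} (M : Fin t → Fin u → ℤ) (σ : Equiv.Perm (Fin k))
    (c : Fin (t + 1) → ℕ) (r : Fin (u + 1) → ℕ) : Prop :=
  Monotone c ∧ Monotone r ∧ c 0 = 0 ∧ c (Fin.last t) = k ∧ r 0 = 0 ∧ r (Fin.last u) = k ∧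
    ∀ (i : Fin t) (j : Fin u),
      (M i j = 0 → ∀ p : Fin k, ¬ InCell σ c r i j p) ∧
        (M i j = 1 → ∀ p q : Fin k, InCell σ c r i j p → InCell σ c r i j q →
          p < q → σ p < σ q) ∧
          (M i j = -1 → ∀ p q : Fin k, InCell σ c r i j p → InCell σ c r i j q →
            p < q → σ q < σ p)

/-- Membership in the monotone grid class `Grid(M)`. -/
def InGridClass {t u : ℕ} (M : Fin t → Fin u → ℤ) {k : ℕ} (σ : Equiv.Perm (Fin k)) : Prop :=
  ∃ (c : Fin (t + 1) → ℕ) (r : Fin (u + 1) → ℕ), IsGridding M σ c r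

/-- `|Grid_n(M)|`, the number of permutations of length `n` in the grid class of `M`. -/
def gridCount {t u : ℕ} (M : Fin t → Fin u → ℤ) (n : ℕ) : ℕ :=
  Nat.card {σ : Equiv.Perm (Fin n) // InGridClass M σ}


/-! ### Part 1: the greedy caterpillar (argument of Shearer) -/

/-- The transfer value of a caterpillar, as an extended nonnegative real. -/
def TT (N : ℕ → ℕ) (z : ENNReal) : ℕ → ENNReal
  | 0 => 1
  | k + 1 => (1 - z * ((N k : ENNReal) + TT N z k))⁻¹

/-- The greedy sequence. -/
def tt (Γ b : ℝ) : ℕ → ℝ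
  | 0 => 1
  | k + 1 => Γ / (Γ - ((⌊b - tt Γ b k⌋₊ : ℕ) + tt Γ b k))

theorem potential_argument (Γ a b : ℝ) (ha : 1 < a) (hab : a + 1 < b) (hs : a + b = Γ)
    (hp : a * b = Γ) (n : ℕ → ℕ) (d e : ℕ → ℝ) (hd : ∀ i, a ≤ d i) (hd' : ∀ i, d i < a + 1)
    (hrec : ∀ i, d (i + 1) = Γ - Γ / d i - n i) (c : ℝ) (hc : 0 < c)
    (he0 : 0 ≤ e 0) (he : ∀ i, c + Γ / (d i) ^ 2 * e i ≤ e (i + 1)) (hB : ∀ i, e i ≤ a + 1) :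
    False := by
  have hΓ : 0 < Γ := by linarith
  have hdpos : ∀ i, 0 < d i := fun i => by linarith [hd i]
  have hquad : a ^ 2 - a - 1 ≤ 0 := by nlinarith
  set H : ℝ := b - a with hH
  have hHpos : 0 < H := by linarith
  set c' : ℝ := c / H with hc'
  have hc'pos : 0 < c' := by positivity
  have hc'H : c' * H = c := by rw [hc']; field_simp
  have hnn : ∀ i, 0 ≤ (d i - a) * (b - d i) := fun i =>
    mul_nonneg (by linarith [hd i]) (by linarith [hd' i])
  have hle : ∀ i, (d i - a) * (b - d i) ≤ H := fun i => by
    have h1 : d i - a ≤ 1 := by linarith [hd' i]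
    have h2 : b - d i ≤ H := by linarith [hd i]
    have h3 : 0 ≤ b - d i := by linarith [hd' i]
    nlinarith [hd i]
  have key : ∀ i : ℕ, c' * i * ((d i - a) * (b - d i)) ≤ e i := by
    intro i
    induction i with
    | zero => simpa using he0
    | succ i ih =>
      have h1 := he i
      have hdi := hdpos i
      have hid : Γ / (d i) ^ 2 * ((d i - a) * (b - d i)) =
          ((Γ - Γ / d i) - a) * (b - (Γ - Γ / d i)) := by
        have e1 : (d i - a) * (b - d i) = - (d i) ^ 2 + Γ * d i - Γ := by
          rw [← hs]; nlinarith
        have e2 : ∀ x : ℝ, (x - a) * (b - x) = - x ^ 2 + Γ * x - Γ := by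
          intro x; rw [← hs]; nlinarith
        rw [e1, e2]; field_simp; ring
      have hcmp : (d (i + 1) - a) * (b - d (i + 1)) ≤
          ((Γ - Γ / d i) - a) * (b - (Γ - Γ / d i)) := by
        have hD : 2 * (Γ - Γ / d i) ≤ Γ + 1 := by
          have : (Γ - 1) * d i ≤ 2 * Γ := by nlinarith [hd' i]
          have : (Γ - 1) ≤ 2 * Γ / d i := by rwa [le_div_iff₀ hdi]
          have : 2 * Γ / d i = 2 * (Γ / d i) := by ring
          linarith
        have hr := hrec i
        set D := Γ - Γ / d i
        rw [hr]
        rcases Nat.eq_zero_or_pos (n i) with h0 | h0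
        · simp [h0]
        · have : (1 : ℝ) ≤ n i := by exact_mod_cast h0
          nlinarith
      have h2 : c' * i * (Γ / (d i) ^ 2 * ((d i - a) * (b - d i))) ≤ Γ / (d i) ^ 2 * e i := by
        have : 0 ≤ Γ / (d i) ^ 2 := by positivity
        nlinarith
      rw [hid] at h2
      have h3 : c' * i * ((d (i + 1) - a) * (b - d (i + 1))) ≤
          c' * i * (((Γ - Γ / d i) - a) * (b - (Γ - Γ / d i))) := by
        gcongr
      have h4 : c' * ((d (i + 1) - a) * (b - d (i + 1))) ≤ c := by
        rw [← hc'H]; gcongr; exact hle _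
      push_cast
      nlinarith
  -- eventually the multiplier is at least one
  have hbig : ∃ i0 : ℕ, ∀ i, i0 ≤ i → 1 ≤ Γ / (d i) ^ 2 := by
    have hq : 0 < c' * (b - a - 1) := mul_pos hc'pos (by linarith)
    set η : ℝ := 1 / 4 * min 1 (a * b - a ^ 2) / a
    have hη : 0 < a * b - a ^ 2 := by nlinarith
    have hs1 : ∃ η : ℝ, 0 < η ∧ (a + η) ^ 2 ≤ Γ := by
      refine ⟨Real.sqrt Γ - a, ?_, ?_⟩
      · have : a < Real.sqrt Γ := Real.lt_sqrt_of_sq_lt (by rw [← hp]; linarith)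
        linarith
      · rw [add_sub_cancel, Real.sq_sqrt hΓ.le]
    obtain ⟨η, hη0, hη1⟩ := hs1
    obtain ⟨i0, hi0⟩ := exists_nat_gt ((a + 1) / (c' * (b - a - 1) * η))
    refine ⟨i0, fun i hi => ?_⟩
    rw [le_div_iff₀ (by have := hdpos i; positivity), one_mul]
    refine le_trans ?_ hη1
    have : d i ≤ a + η := by
      by_contra hcon
      push Not at hcon
      have h1 := (key i).trans (hB i)
      have h2 : (a + 1) / (c' * (b - a - 1) * η) < i := lt_of_lt_of_le hi0 (by exact_mod_cast hi)
      rw [div_lt_iff₀ (by positivity)] at h2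
      have h3 : η * (b - a - 1) ≤ (d i - a) * (b - d i) := by
        apply mul_le_mul <;> linarith [hd' i, hd i]
      have h4 : c' * i * (η * (b - a - 1)) ≤ c' * i * ((d i - a) * (b - d i)) := by gcongr
      nlinarith
    have := hdpos i
    gcongr
  obtain ⟨i0, hi0⟩ := hbig
  have hepos : ∀ i, 0 ≤ e i := fun i => le_trans (by have := hnn i; positivity) (key i)
  have hgrow : ∀ m : ℕ, c * m ≤ e (i0 + m) := by
    intro m
    induction m with
    | zero => simpa using hepos _
    | succ m ih =>
      have h1 := he (i0 + m)
      have h2 := hi0 (i0 + m) (by omega)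
      have h3 := hepos (i0 + m)
      rw [← add_assoc]
      push_cast
      nlinarith
  obtain ⟨m, hm⟩ := exists_nat_gt ((a + 1) / c)
  rw [div_lt_iff₀ hc] at hm
  linarith [hgrow m, hB (i0 + m)]

theorem greedy_exists (g Γ : ℝ) (hg : 2 + Real.sqrt 5 ≤ g) (hgΓ : g < Γ) :
    ∃ (N : ℕ → ℕ) (k : ℕ), (∀ i, TT N (ENNReal.ofReal (1 / Γ)) i ≠ ⊤) ∧
      TT N (ENNReal.ofReal (1 / g)) k = ⊤ := by
  have h5 : (0 : ℝ) ≤ Real.sqrt 5 := Real.sqrt_nonneg 5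
  have h52 : Real.sqrt 5 ^ 2 = 5 := Real.sq_sqrt (by norm_num)
  have hg0 : 0 < g := by linarith
  have hΓ0 : 0 < Γ := by linarith
  have hdisc : 1 < Γ ^ 2 - 4 * Γ := by nlinarith
  set r := Real.sqrt (Γ ^ 2 - 4 * Γ) with hr
  have hr2 : r ^ 2 = Γ ^ 2 - 4 * Γ := Real.sq_sqrt (by linarith)
  have hr1 : 1 < r := by
    rw [hr]; exact Real.lt_sqrt_of_sq_lt (by linarith)
  obtain ⟨a, ha⟩ : ∃ a, a = (Γ - r) / 2 := ⟨_, rfl⟩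
  obtain ⟨b, hb⟩ : ∃ b, b = (Γ + r) / 2 := ⟨_, rfl⟩
  have hs : a + b = Γ := by rw [ha, hb]; ring
  have hp : a * b = Γ := by rw [ha, hb]; nlinarith
  have hab : a + 1 < b := by rw [ha, hb]; linarith
  have hb0 : 0 < b := by linarith
  have ha1 : 1 < a := by
    have : b * (a - 1) = a := by nlinarith
    have ha0 : 0 < a := by
      by_contra h; push Not at h
      nlinarith
    nlinarith
  set t := tt Γ b with ht
  set N : ℕ → ℕ := fun k => ⌊b - t k⌋₊ with hN
  have htsucc : ∀ k, t (k + 1) = Γ / (Γ - (N k + t k)) := fun k => rfl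
  have ht0 : t 0 = 1 := rfl
  set d : ℕ → ℝ := fun k => Γ - (N k + t k) with hd
  have hdb : ∀ k, t k ≤ b → a ≤ d k ∧ d k < a + 1 := by
    intro k hk
    have h1 := Nat.floor_le (sub_nonneg.2 hk)
    have h2 := Nat.lt_floor_add_one (b - t k)
    simp only [hd, hN]
    constructor <;> linarith
  have htb : ∀ k, 1 ≤ t k ∧ t k ≤ b := by
    intro k
    induction k with
    | zero => rw [ht0]; constructor <;> linarith
    | succ k ih =>
      obtain ⟨h1, h2⟩ := hdb k ih.2
      have hd0 : 0 < d k := by linarith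
      rw [htsucc]
      change 1 ≤ Γ / d k ∧ Γ / d k ≤ b
      rw [le_div_iff₀ hd0, div_le_iff₀ hd0]
      constructor
      · nlinarith
      · nlinarith
  have hda : ∀ k, a ≤ d k := fun k => (hdb k (htb k).2).1
  have hda' : ∀ k, d k < a + 1 := fun k => (hdb k (htb k).2).2
  have hTΓ : ∀ k, TT N (ENNReal.ofReal (1 / Γ)) k = ENNReal.ofReal (t k) := by
    intro k
    induction k with
    | zero => simp [TT, ht0]
    | succ k ih =>
      have hd0 : 0 < d k := by linarith [hda k]
      have ht1 := (htb k).1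
      rw [TT, ih, htsucc, ← ENNReal.ofReal_natCast, ← ENNReal.ofReal_add (by positivity)
        (by linarith), ← ENNReal.ofReal_mul (by positivity), ← ENNReal.ofReal_one,
        ← ENNReal.ofReal_sub _ (by positivity), ← ENNReal.ofReal_inv_of_pos]
      · congr 1
        change _ = Γ / d k
        have : (1 - 1 / Γ * (N k + t k)) = d k / Γ := by simp only [hd]; field_simp
        rw [this, inv_div]
      · have : (1 - 1 / Γ * (N k + t k)) = d k / Γ := by simp only [hd]; field_simp
        rw [this]; positivity
  by_contra hcon
  push Not at hcon
  have hfin : ∀ k, TT N (ENNReal.ofReal (1 / g)) k ≠ ⊤ := by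
    intro k
    exact hcon N k (fun i => by rw [hTΓ]; exact ENNReal.ofReal_ne_top)
  set s : ℕ → ℝ := fun k => (TT N (ENNReal.ofReal (1 / g)) k).toReal with hsdef
  have hs0 : s 0 = 1 := by simp [hsdef, TT]
  have hsnn : ∀ k, 0 ≤ s k := fun k => ENNReal.toReal_nonneg
  have hsT : ∀ k, TT N (ENNReal.ofReal (1 / g)) k = ENNReal.ofReal (s k) := fun k =>
    (ENNReal.ofReal_toReal (hfin k)).symm
  have hstep : ∀ k, 0 < g - (N k + s k) ∧ s (k + 1) = g / (g - (N k + s k)) := by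
    intro k
    have h1 := hfin (k + 1)
    have h2 := hsT (k + 1)
    have h0 := hsnn k
    rw [TT, hsT k, ← ENNReal.ofReal_natCast, ← ENNReal.ofReal_add (by positivity) h0,
        ← ENNReal.ofReal_mul (by positivity), ← ENNReal.ofReal_one,
        ← ENNReal.ofReal_sub _ (by positivity)] at h1 h2
    have h3 : 0 < 1 - 1 / g * (N k + s k) := by
      by_contra h
      push Not at h
      rw [ENNReal.ofReal_of_nonpos h] at h1
      simp at h1
    have h4 : (1 - 1 / g * (N k + s k)) = (g - (N k + s k)) / g := by field_simp
    rw [← ENNReal.ofReal_inv_of_pos h3, ENNReal.ofReal_eq_ofReal_iff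
      (inv_nonneg.2 h3.le) (hsnn _), h4, inv_div] at h2
    refine ⟨?_, h2.symm⟩
    rw [h4] at h3
    rwa [div_pos_iff_of_pos_right hg0] at h3
  set δ := Γ - g with hδ
  have hδ0 : 0 < δ := by linarith
  set d' : ℕ → ℝ := fun k => g - (N k + s k) with hd'
  have hd'0 : ∀ k, 0 < d' k := fun k => (hstep k).1
  have hssucc : ∀ k, s (k + 1) = g / d' k := fun k => (hstep k).2
  set e : ℕ → ℝ := fun k => d k - d' k with he
  have hest : ∀ k, e k = δ + (s k - t k) := fun k => by
    simp only [he, hd, hd', hδ]; ring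
  have hmono : ∀ k, δ ≤ e k → Γ / d k ≤ g / d' k := by
    intro k hk
    have h1 := hda k
    have h2 := hda' k
    have h3 := hd'0 k
    rw [div_le_div_iff₀ (by linarith) h3]
    have : d' k = d k - e k := by simp only [he]; ring
    rw [this]
    have : Γ = g + δ := by rw [hδ]; ring
    nlinarith
  have hst : ∀ k, t k ≤ s k := by
    intro k
    induction k with
    | zero => rw [ht0, hs0]
    | succ k ih =>
      rw [hssucc]
      change Γ / d k ≤ _
      exact hmono k (by rw [hest]; linarith)
  have heδ : ∀ k, δ ≤ e k := fun k => by rw [hest]; linarith [hst k]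
  refine potential_argument Γ a b ha1 hab hs hp (fun i => N (i + 1)) d e hda hda' ?_
    (δ * (1 - 1 / a)) ?_ ?_ ?_ ?_
  · intro i
    change Γ - (N (i + 1) + Γ / d i) = _
    ring
  · apply mul_pos hδ0
    have : 1 / a < 1 := by rw [div_lt_one (by linarith)]; exact ha1
    linarith
  · linarith [heδ 0]
  · intro i
    have hd0 : 0 < d i := by linarith [hda i]
    have h1 : e (i + 1) = δ * (1 - 1 / d i) + (g / d' i) * (e i / d i) := by
      rw [hest, hssucc]
      change δ + (g / d' i - Γ / d i) = _
      have h2 := hd'0 i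
      have : d' i = d i - e i := by simp only [he]; ring
      have h3 : e i = d i - d' i := rfl
      have h4 : Γ = g + δ := by rw [hδ]; ring
      rw [h3, h4]
      field_simp
      ring
    have h2 : Γ / d i ^ 2 * e i = Γ / d i * (e i / d i) := by field_simp
    rw [h1, h2]
    have h3 := hmono i (heδ i)
    have h4 : 0 ≤ e i / d i := div_nonneg (by linarith [heδ i]) hd0.le
    have h5 : 1 / d i ≤ 1 / a := one_div_le_one_div_of_le (by linarith) (hda i)
    have h6 : δ * (1 - 1 / a) ≤ δ * (1 - 1 / d i) := by gcongr
    have h7 : Γ / d i * (e i / d i) ≤ g / d' i * (e i / d i) := by gcongr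
    linarith
  · intro i
    have := hda' i
    have := hd'0 i
    simp only [he]; linarith

/-! ### Part 2: generating function of the weights of a caterpillar -/

/-- Fibre of a function, as a finset. -/
def fib {E I : Type} [Fintype E] (f : E → I) (i : I) : Finset E :=
  Finset.univ.filter (fun e => f e = i)

@[simp] theorem mem_fib {E I : Type} [Fintype E] (f : E → I) (i : I) (e : E) :
    e ∈ fib f i ↔ f e = i := by
  simp [fib]

/-- The product of multinomial coefficients attached to a bipartite graph with edge set `E`. -/
def wt {E I J : Type} [Fintype E] [Fintype I] [Fintype J] (col : E → I) (row : E → J)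
    (a : E → ℕ) : ℕ :=
  (∏ i, Nat.multinomial (fib col i) a) *
    ∏ j, Nat.multinomial (fib row j) a

theorem multinomial_map' {α β : Type} (f : α ↪ β) (s : Finset α) (a : β → ℕ) :
    Nat.multinomial (s.map f) a = Nat.multinomial s (fun x => a (f x)) := by
  simp [Nat.multinomial]

theorem neg_binomial (y : ENNReal) (b : ℕ) :
    ∑' m : ℕ, ((m + b).choose b : ENNReal) * y ^ m = ((1 - y)⁻¹) ^ (b + 1) := by
  rcases lt_or_ge y 1 with hy | hy
  · obtain ⟨r, hr⟩ : ∃ r : NNReal, y = r := ⟨y.toNNReal, (ENNReal.coe_toNNReal hy.ne_top).symm⟩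
    subst hr
    have hr1 : (r : ℝ) < 1 := by exact_mod_cast hy
    have hn : ‖(r : ℝ)‖ < 1 := by simpa using hr1
    have h1 := tsum_choose_mul_geometric_of_norm_lt_one b hn
    have h2 := summable_choose_mul_geometric_of_norm_lt_one b hn
    have h3 : ∀ m : ℕ, ((m + b).choose b : ENNReal) * (r : ENNReal) ^ m =
        ENNReal.ofReal (((m + b).choose b : ℝ) * (r : ℝ) ^ m) := by
      intro m
      rw [ENNReal.ofReal_mul (by positivity), ENNReal.ofReal_natCast,
        ENNReal.ofReal_pow (by positivity), ENNReal.ofReal_coe_nnreal]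
    simp_rw [h3]
    rw [← ENNReal.ofReal_tsum_of_nonneg (fun m => by positivity) h2, h1]
    have h4 : (1 - (r : ENNReal)) = ENNReal.ofReal (1 - (r : ℝ)) := by
      rw [ENNReal.ofReal_sub _ (by positivity), ENNReal.ofReal_one, ENNReal.ofReal_coe_nnreal]
    have h5 : 0 < 1 - (r : ℝ) := by linarith
    rw [h4, ← ENNReal.ofReal_inv_of_pos h5, ← ENNReal.ofReal_pow (by positivity)]
    congr 1
    rw [one_div, inv_pow]
  · have : (1 - y)⁻¹ = ⊤ := by rw [tsub_eq_zero_of_le hy, ENNReal.inv_zero]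
    rw [this, ENNReal.top_pow (by omega)]
    rw [eq_top_iff]
    have h1 : ∑' m : ℕ, (1 : ENNReal) = ⊤ := ENNReal.tsum_const_eq_top_of_ne_zero one_ne_zero
    rw [← h1]
    refine ENNReal.tsum_le_tsum fun m => ?_
    have h2 : (1 : ENNReal) ≤ ((m + b).choose b : ENNReal) := by
      exact_mod_cast Nat.choose_pos (by omega)
    calc (1 : ENNReal) = 1 * 1 := by simp
      _ ≤ _ := mul_le_mul' h2 (one_le_pow₀ hy)

theorem multinomial_gen {κ : Type} [Fintype κ] (y : κ → ENNReal) (b : ℕ) :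
    ∑' x : κ → ℕ, (Nat.multinomial Finset.univ x : ENNReal) *
      ((∑ o, x o + b).choose b : ENNReal) * ∏ o, y o ^ x o = ((1 - ∑ o, y o)⁻¹) ^ (b + 1) := by
  rw [← neg_binomial]
  rw [← (Equiv.sigmaFiberEquiv (fun x : κ → ℕ => ∑ o, x o)).tsum_eq, ENNReal.tsum_sigma']
  refine tsum_congr fun m => ?_
  rw [Finset.sum_pow_eq_sum_piAntidiag, Finset.mul_sum]
  have h0 : ∀ x : κ → ℕ, x ∈ Finset.piAntidiag Finset.univ m ↔ ∑ o, x o = m := by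
    intro x; simp [Finset.mem_piAntidiag]
  rw [← Finset.tsum_subtype]
  rw [← (Equiv.subtypeEquivRight h0).symm.tsum_eq]
  refine tsum_congr fun x => ?_
  have hx : ∑ o, x.1 o = m := x.2
  simp [hx]
  ring

theorem wt_step {E I J : Type} [Fintype E] [Fintype I] [Fintype J] (col : E → I) (row : E → J)
    (root : I) (n : ℕ) (a : E → ℕ) (x : Option (Fin n) → ℕ) :
    wt (E := E ⊕ Option (Fin n)) (I := Option J) (J := I ⊕ Fin n)
      (Sum.elim (fun e => some (row e)) (fun _ => none))
      (Sum.elim (fun e => Sum.inl (col e)) (fun o => o.elim (Sum.inl root) Sum.inr))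
      (Sum.elim a x) =
    Nat.multinomial Finset.univ x *
      (wt col row a *
        (∑ e ∈ fib col root, a e + x none).choose (x none)) := by
  have h1 : Nat.multinomial (fib (E := E ⊕ Option (Fin n)) (Sum.elim (fun e => some (row e)) (fun _ => none)) (none)) (Sum.elim a x) =
      Nat.multinomial Finset.univ x := by
    have : (fib (E := E ⊕ Option (Fin n)) (Sum.elim (fun e => some (row e)) (fun _ => none)) (none)) =
        Finset.univ.map ⟨Sum.inr, Sum.inr_injective⟩ := by
      ext e; rcases e with e | e <;> simp
    rw [this, multinomial_map']; rfl
  have h2 : ∀ j, Nat.multinomial (fib (E := E ⊕ Option (Fin n)) (Sum.elim (fun e => some (row e)) (fun _ => none)) (some j)) (Sum.elim a x) =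
      Nat.multinomial (fib row j) a := by
    intro j
    have : (fib (E := E ⊕ Option (Fin n)) (Sum.elim (fun e => some (row e)) (fun _ => none)) (some j)) =
        (fib row j).map ⟨Sum.inl, Sum.inl_injective⟩ := by
      ext e; rcases e with e | e <;> simp
    rw [this, multinomial_map']; rfl
  have h3 : ∀ l, Nat.multinomial (fib (E := E ⊕ Option (Fin n)) (Sum.elim (fun e => (Sum.inl (col e) : I ⊕ Fin n)) (fun o => o.elim (Sum.inl root) Sum.inr)) (Sum.inr l)) (Sum.elim a x) = 1 := by
    intro l
    have : (fib (E := E ⊕ Option (Fin n)) (Sum.elim (fun e => (Sum.inl (col e) : I ⊕ Fin n)) (fun o => o.elim (Sum.inl root) Sum.inr)) (Sum.inr l)) = {Sum.inr (some l)} := by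
      ext e; rcases e with e | (_ | e) <;> simp
    rw [this, Nat.multinomial_singleton]
  have h4 : ∀ i, Nat.multinomial (fib (E := E ⊕ Option (Fin n)) (Sum.elim (fun e => (Sum.inl (col e) : I ⊕ Fin n)) (fun o => o.elim (Sum.inl root) Sum.inr)) (Sum.inl i)) (Sum.elim a x) =
      Nat.multinomial (fib col i) a *
        (if i = root then (∑ e ∈ fib col root, a e
          + x none).choose (x none) else 1) := by
    intro i
    by_cases hi : i = root
    · subst hi
      have : (fib (E := E ⊕ Option (Fin n)) (Sum.elim (fun e => (Sum.inl (col e) : I ⊕ Fin n)) (fun o => o.elim (Sum.inl i) Sum.inr)) (Sum.inl i)) = insert (Sum.inr none)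
          ((fib col i).map ⟨Sum.inl, Sum.inl_injective⟩) := by
        ext e; rcases e with e | (_ | e) <;> simp
      rw [this, Nat.multinomial_insert (by simp), multinomial_map', Finset.sum_map]
      simp only [Sum.elim_inr, Function.Embedding.coeFn_mk, Sum.elim_inl, if_true]
      rw [mul_comm, add_comm (x none)]
    · have : (fib (E := E ⊕ Option (Fin n)) (Sum.elim (fun e => (Sum.inl (col e) : I ⊕ Fin n)) (fun o => o.elim (Sum.inl root) Sum.inr)) (Sum.inl i)) =
          ((fib col i).map ⟨Sum.inl, Sum.inl_injective⟩) := by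
        ext e; rcases e with e | (_ | e) <;> simp [Ne.symm hi]
      rw [this, multinomial_map', if_neg hi, mul_one]; rfl
  unfold wt
  rw [Fintype.prod_option, Fintype.prod_sum_type, h1]
  simp_rw [h2, h3, h4]
  rw [Finset.prod_mul_distrib]
  simp only [Finset.prod_ite_eq', Finset.mem_univ, if_true, Finset.prod_const_one, mul_one]
  ring

theorem tree_exists (N : ℕ → ℕ) (k : ℕ) : ∃ (E I J : Type) (_ : Fintype E) (_ : Fintype I)
    (_ : Fintype J) (col : E → I) (row : E → J) (root : I),
    Function.Injective (fun e => (col e, row e)) ∧ (0 < k → Nonempty E) ∧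
    ∀ (z : ENNReal) (b : ℕ), ∑' a : E → ℕ, z ^ (∑ e, a e) * ((wt col row a : ENNReal) *
      ((∑ e ∈ fib col root, a e + b).choose b : ℕ)) =
      (∏ i ∈ Finset.range (k + 1), TT N z i) * (TT N z k) ^ b := by
  induction k with
  | zero =>
    refine ⟨Empty, Unit, Empty, inferInstance, inferInstance, inferInstance, Empty.elim, Empty.elim,
      (), fun e => e.elim, by simp, fun z b => ?_⟩
    rw [tsum_fintype, Fintype.sum_unique]
    have h0 : fib (Empty.elim : Empty → Unit) () = ∅ := Finset.eq_empty_of_isEmpty _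
    simp [wt, TT, h0]
  | succ k ih =>
    obtain ⟨E, I, J, _, _, _, col, row, root, hinj, -, hsum⟩ := ih
    refine ⟨E ⊕ Option (Fin (N k)), Option J, I ⊕ Fin (N k), inferInstance, inferInstance,
      inferInstance, Sum.elim (fun e => some (row e)) (fun _ => none),
      Sum.elim (fun e => Sum.inl (col e)) (fun o => o.elim (Sum.inl root) Sum.inr), none,
      ?_, fun _ => ⟨Sum.inr none⟩, fun z b => ?_⟩
    · rintro (e | (_ | l)) (e' | (_ | l')) h <;> simp at h ⊢
      · exact hinj (Prod.ext h.2 h.1)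
      · exact h
    · have hroot : ∀ (a : E → ℕ) (x : Option (Fin (N k)) → ℕ),
          ∑ e ∈ fib (E := E ⊕ Option (Fin (N k))) (Sum.elim (fun e => some (row e)) (fun _ => none)) (none), Sum.elim a x e =
          ∑ o, x o := by
        intro a x
        have : (fib (E := E ⊕ Option (Fin (N k))) (Sum.elim (fun e => some (row e)) (fun _ => none)) (none)) =
            Finset.univ.map ⟨Sum.inr, Sum.inr_injective⟩ := by
          ext e; rcases e with e | e <;> simp
        rw [this, Finset.sum_map]; rfl
      rw [← (Equiv.sumArrowEquivProdArrow E (Option (Fin (N k))) ℕ).symm.tsum_eq,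
        ENNReal.tsum_prod', ENNReal.tsum_comm]
      have hterm : ∀ (a : E → ℕ) (x : Option (Fin (N k)) → ℕ),
          (Equiv.sumArrowEquivProdArrow E (Option (Fin (N k))) ℕ).symm (a, x) = Sum.elim a x :=
        fun a x => rfl
      simp only [hterm, hroot, wt_step, Fintype.sum_sum_type, Sum.elim_inl, Sum.elim_inr]
      have hx : ∀ x : Option (Fin (N k)) → ℕ,
          ∑' a : E → ℕ, z ^ (∑ e, a e + ∑ o, x o) * (((Nat.multinomial Finset.univ x *
            (wt col row a * (∑ e ∈ fib col root, a e +
              x none).choose (x none)) : ℕ) : ENNReal) * ((∑ o, x o + b).choose b : ℕ)) =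
          (∏ i ∈ Finset.range (k + 1), TT N z i) * ((Nat.multinomial Finset.univ x : ENNReal) *
      ((∑ o, x o + b).choose b : ENNReal) *
        ∏ o, (fun o : Option (Fin (N k)) => o.elim (z * TT N z k) (fun _ => z)) o ^ x o) := by
        intro x
        have h1 := hsum z (x none)
        have h2 : ∏ o, (fun o : Option (Fin (N k)) => o.elim (z * TT N z k) (fun _ => z)) o ^ x o
            = z ^ (∑ o, x o) * TT N z k ^ (x none) := by
          rw [Fintype.prod_option, Fintype.sum_option]
          simp only [Option.elim]
          rw [Finset.prod_pow_eq_pow_sum, pow_add, mul_pow]; ring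
        rw [h2]
        calc _ = ∑' a : E → ℕ, (z ^ (∑ e, a e) * ((wt col row a : ENNReal) *
              ((∑ e ∈ fib col root, a e +
                x none).choose (x none) : ℕ))) * (z ^ (∑ o, x o) *
                (Nat.multinomial Finset.univ x : ENNReal) * ((∑ o, x o + b).choose b : ℕ)) := by
              refine tsum_congr fun a => ?_
              push_cast
              rw [pow_add]; ring
          _ = _ := by
              rw [ENNReal.tsum_mul_right, h1]; ring
      rw [tsum_congr hx, ENNReal.tsum_mul_left, multinomial_gen]
      have hy : (1 - ∑ o, (fun o : Option (Fin (N k)) => o.elim (z * TT N z k) (fun _ => z)) o)⁻¹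
          = TT N z (k + 1) := by
        rw [Fintype.sum_option, TT]
        simp only [Option.elim, Finset.sum_const, Finset.card_univ, Fintype.card_fin, nsmul_eq_mul]
        congr 2
        ring
      rw [hy, Finset.prod_range_succ _ (k + 1)]
      ring

/-! ### Part 3: existence of the growth rate (Fekete) -/

theorem multinomial_mul_le {α : Type} (s : Finset α) (a b : α → ℕ) :
    Nat.multinomial s a * Nat.multinomial s b ≤ Nat.multinomial s (a + b) := by
  induction s using Finset.induction_on with
  | empty => simp
  | insert x s hx ih =>
    rw [Nat.multinomial_insert hx, Nat.multinomial_insert hx, Nat.multinomial_insert hx]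
    have h1 : (a x + ∑ i ∈ s, a i).choose (a x) * (b x + ∑ i ∈ s, b i).choose (b x) ≤
        ((a + b) x + ∑ i ∈ s, (a + b) i).choose ((a + b) x) := by
      have h2 : (a + b) x + ∑ i ∈ s, (a + b) i =
          (a x + ∑ i ∈ s, a i) + (b x + ∑ i ∈ s, b i) := by
        simp only [Pi.add_apply, Finset.sum_add_distrib]; ring
      rw [h2, Nat.add_choose_eq (a x + ∑ i ∈ s, a i) (b x + ∑ i ∈ s, b i)]
      have hmem : (a x, b x) ∈ Finset.HasAntidiagonal.antidiagonal ((a + b) x) := by simp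
      exact Finset.single_le_sum (f := fun ij : ℕ × ℕ => (a x + ∑ i ∈ s, a i).choose ij.1 *
        (b x + ∑ i ∈ s, b i).choose ij.2) (fun _ _ => Nat.zero_le _)
        hmem
    calc _ = ((a x + ∑ i ∈ s, a i).choose (a x) * (b x + ∑ i ∈ s, b i).choose (b x)) *
        (Nat.multinomial s a * Nat.multinomial s b) := by ring
      _ ≤ _ := Nat.mul_le_mul h1 ih

theorem wt_pos {E I J : Type} [Fintype E] [Fintype I] [Fintype J] (col : E → I) (row : E → J)
    (a : E → ℕ) : 1 ≤ wt col row a := by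
  unfold wt
  exact Nat.mul_pos (Finset.prod_pos fun i _ => Nat.multinomial_pos _ _)
    (Finset.prod_pos fun i _ => Nat.multinomial_pos _ _)

theorem wt_add {E I J : Type} [Fintype E] [Fintype I] [Fintype J] (col : E → I) (row : E → J)
    (a b : E → ℕ) : wt col row a * wt col row b ≤ wt col row (a + b) := by
  unfold wt
  calc _ = (∏ i, Nat.multinomial (fib col i) a * Nat.multinomial (fib col i) b) *
      ∏ j, Nat.multinomial (fib row j) a * Nat.multinomial (fib row j) b := by
        rw [Finset.prod_mul_distrib, Finset.prod_mul_distrib]; ring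
    _ ≤ _ := Nat.mul_le_mul (Finset.prod_le_prod' fun i _ => multinomial_mul_le _ _ _)
        (Finset.prod_le_prod' fun i _ => multinomial_mul_le _ _ _)

theorem tsum_pow_fin (q : ENNReal) (n : ℕ) :
    ∑' a : Fin n → ℕ, q ^ (∑ e, a e) = ((1 - q)⁻¹) ^ n := by
  induction n with
  | zero => rw [tsum_fintype, Fintype.sum_unique]; simp
  | succ n ih =>
    rw [← (Fin.consEquiv (fun _ => ℕ)).tsum_eq, ENNReal.tsum_prod']
    have : ∀ (m : ℕ) (a : Fin n → ℕ), q ^ (∑ e, (Fin.consEquiv (fun _ : Fin (n + 1) => ℕ)) (m, a) e)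
        = q ^ m * q ^ (∑ e, a e) := by
      intro m a
      rw [Fin.sum_univ_succ, pow_add]; rfl
    simp_rw [this, ENNReal.tsum_mul_left, ih, ENNReal.tsum_mul_right, ENNReal.tsum_geometric]
    ring

theorem tsum_pow_ne_top {E : Type} [Fintype E] (q : ENNReal) (hq : q < 1) :
    ∑' a : E → ℕ, q ^ (∑ e, a e) ≠ ⊤ := by
  have h := tsum_pow_fin q (Fintype.card E)
  rw [← (Equiv.arrowCongr (Fintype.equivFin E) (Equiv.refl ℕ)).tsum_eq] at h
  have h2 : ∀ a : E → ℕ, q ^ (∑ e, (Equiv.arrowCongr (Fintype.equivFin E) (Equiv.refl ℕ)) a e) =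
      q ^ (∑ e, a e) := by
    intro a
    congr 1
    exact Equiv.sum_comp (Fintype.equivFin E).symm a
  simp_rw [h2] at h
  rw [h]
  apply ENNReal.pow_ne_top
  rw [ENNReal.inv_ne_top]
  exact (tsub_pos_of_lt hq).ne'

theorem tendsto_log_succ_div : Tendsto (fun n : ℕ => Real.log ((n : ℝ) + 1) / n) atTop (nhds 0) := by
  have h := Real.tendsto_pow_log_div_mul_add_atTop 1 (-1) 1 one_ne_zero
  have h2 : Tendsto (fun n : ℕ => (n : ℝ) + 1) atTop atTop :=
    tendsto_atTop_add_const_right _ _ tendsto_natCast_atTop_atTop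
  refine (h.comp h2).congr fun n => ?_
  simp

theorem fekete_growth {E : Type} [Fintype E] [Nonempty E] (w : (E → ℕ) → ℕ) (h1 : ∀ a, 1 ≤ w a)
    (hadd : ∀ a b, w a * w b ≤ w (a + b)) (g : ℕ → ℕ) (hlow : ∀ a, w a ≤ g (∑ e, a e)) (K : ℕ)
    (hup : ∀ n B, (∀ a, ∑ e, a e = n → w a ≤ B) → g n ≤ (n + 1) ^ K * B) (γ Γ : ℝ) (hγ : 0 < γ)
    (hΓ : 0 < Γ)
    (hfin : ∑' a : E → ℕ, ENNReal.ofReal (1 / Γ) ^ (∑ e, a e) * (w a : ENNReal) ≠ ⊤)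
    (hinf : ∑' a : E → ℕ, ENNReal.ofReal (1 / γ) ^ (∑ e, a e) * (w a : ENNReal) = ⊤) :
    ∃ L : ℝ, Tendsto (fun n : ℕ => (g n : ℝ) ^ (1 / (n : ℝ))) atTop (nhds L) ∧ γ ≤ L ∧ L ≤ Γ := by
  set G : ℕ → ℕ := fun n => (Finset.piAntidiag (Finset.univ : Finset E) n).sup w with hG
  have hmem : ∀ n (a : E → ℕ), a ∈ Finset.piAntidiag (Finset.univ : Finset E) n ↔ ∑ e, a e = n := by
    intro n a; simp [Finset.mem_piAntidiag]
  have hwG : ∀ a, w a ≤ G (∑ e, a e) := fun a =>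
    Finset.le_sup (f := w) ((hmem _ a).2 rfl)
  have hGw : ∀ n, ∃ a, ∑ e, a e = n ∧ G n = w a := by
    intro n
    have hne : (Finset.piAntidiag (Finset.univ : Finset E) n).Nonempty := by
      refine ⟨Pi.single (Classical.arbitrary E) n, (hmem _ _).2 ?_⟩
      simp
    obtain ⟨a, ha, ha'⟩ := Finset.exists_mem_eq_sup _ hne w
    exact ⟨a, (hmem _ _).1 ha, ha'⟩
  have hG1 : ∀ n, 1 ≤ G n := fun n => by
    obtain ⟨a, -, ha⟩ := hGw n
    rw [ha]; exact h1 a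
  have hG1' : ∀ n, (1 : ℝ) ≤ G n := fun n => by exact_mod_cast hG1 n
  have hGmul : ∀ m n, G m * G n ≤ G (m + n) := by
    intro m n
    obtain ⟨a, ha, ha'⟩ := hGw m
    obtain ⟨b, hb, hb'⟩ := hGw n
    rw [ha', hb']
    refine (hadd a b).trans ((hwG _).trans (le_of_eq ?_))
    rw [← ha, ← hb, ← Finset.sum_add_distrib]; rfl
  set u : ℕ → ℝ := fun n => - Real.log (G n) with hu
  have hsub : Subadditive u := by
    intro m n
    have : Real.log (G m) + Real.log (G n) ≤ Real.log (G (m + n)) := by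
      rw [← Real.log_mul (by linarith [hG1' m]) (by linarith [hG1' n])]
      apply Real.log_le_log
      · have := hG1' m; have := hG1' n; positivity
      · exact_mod_cast hGmul m n
    simp only [hu]; linarith
  -- upper bound
  obtain ⟨C, hC1, hC⟩ : ∃ C : ℝ, 1 ≤ C ∧ ∀ n, (G n : ℝ) ≤ C * Γ ^ n := by
    set S := ∑' a : E → ℕ, ENNReal.ofReal (1 / Γ) ^ (∑ e, a e) * (w a : ENNReal)
    refine ⟨max 1 S.toReal, le_max_left _ _, fun n => ?_⟩
    obtain ⟨a, ha, ha'⟩ := hGw n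
    have h2 : ENNReal.ofReal (1 / Γ) ^ (∑ e, a e) * (w a : ENNReal) ≤ S := ENNReal.le_tsum a
    have h3 := ENNReal.toReal_mono hfin h2
    rw [ENNReal.toReal_mul, ENNReal.toReal_pow, ENNReal.toReal_ofReal (by positivity), ha,
      ENNReal.toReal_natCast, ← ha', one_div, inv_pow, inv_mul_le_iff₀ (by positivity)] at h3
    rw [mul_comm]
    refine h3.trans ?_
    gcongr
    exact le_max_right _ _
  have hlogC : ∀ n, Real.log (G n) ≤ Real.log C + n * Real.log Γ := by
    intro n
    rw [← Real.log_pow, ← Real.log_mul (by linarith) (by positivity)]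
    exact Real.log_le_log (by linarith [hG1' n]) (hC n)
  have hlogC0 : 0 ≤ Real.log C := Real.log_nonneg hC1
  have hbdd : BddBelow (Set.range fun n => u n / n) := by
    refine ⟨- Real.log C - |Real.log Γ|, ?_⟩
    rintro _ ⟨n, rfl⟩
    rcases Nat.eq_zero_or_pos n with h0 | h0
    · simp only [h0, Nat.cast_zero, div_zero]
      linarith [abs_nonneg (Real.log Γ)]
    · have hn : (1 : ℝ) ≤ n := by exact_mod_cast h0
      simp only [hu]
      rw [le_div_iff₀ (by linarith)]
      have := hlogC n
      have h4 := le_abs_self (Real.log Γ)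
      nlinarith
  have hlim := hsub.tendsto_lim hbdd
  set l := hsub.lim with hl
  have hgG : ∀ n, G n ≤ g n := fun n => by
    obtain ⟨a, ha, ha'⟩ := hGw n
    rw [ha', ← ha]; exact hlow a
  have hgG' : ∀ n, g n ≤ (n + 1) ^ K * G n := fun n =>
    hup n _ fun a ha => by rw [← ha]; exact hwG a
  have hg1 : ∀ n, (1 : ℝ) ≤ g n := fun n => by exact_mod_cast (hG1 n).trans (hgG n)
  have hloglim : Tendsto (fun n : ℕ => Real.log (g n) / n) atTop (nhds (-l)) := by
    have hlo : Tendsto (fun n : ℕ => Real.log (G n) / n) atTop (nhds (-l)) := by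
      refine hlim.neg.congr fun n => ?_
      simp only [hu]; ring
    have hhi : Tendsto (fun n : ℕ => Real.log (G n) / n + K * (Real.log ((n : ℝ) + 1) / n)) atTop
        (nhds (-l)) := by
      have := hlo.add (tendsto_log_succ_div.const_mul (K : ℝ))
      simpa using this
    refine tendsto_of_tendsto_of_tendsto_of_le_of_le hlo hhi ?_ ?_
    · intro n
      have : Real.log (G n) ≤ Real.log (g n) :=
        Real.log_le_log (by linarith [hG1' n]) (by exact_mod_cast hgG n)
      change Real.log (G n) / n ≤ Real.log (g n) / n
      gcongr
    · intro n
      have : Real.log (g n) ≤ Real.log (G n) + K * Real.log ((n : ℝ) + 1) := by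
        rw [← Real.log_pow, ← Real.log_mul (by linarith [hG1' n]) (by positivity)]
        apply Real.log_le_log (by linarith [hg1 n])
        rw [mul_comm]
        exact_mod_cast hgG' n
      change Real.log (g n) / n ≤ Real.log (G n) / n + K * (Real.log ((n : ℝ) + 1) / n)
      calc Real.log (g n) / n ≤ (Real.log (G n) + K * Real.log ((n : ℝ) + 1)) / n := by gcongr
        _ = _ := by ring
  refine ⟨Real.exp (-l), ?_, ?_, ?_⟩
  · refine ((Real.continuous_exp.tendsto _).comp hloglim).congr fun n => ?_
    rw [Real.rpow_def_of_pos (by linarith [hg1 n])]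
    simp [div_eq_mul_inv]
  · by_contra hcon
    push Not at hcon
    have hw0 : w 0 ≤ 1 := by
      have h2 := hadd 0 0
      have h3 := h1 0
      rw [add_zero] at h2
      nlinarith
    have hwL : ∀ a, (w a : ℝ) ≤ Real.exp (-l) ^ (∑ e, a e) := by
      intro a
      rcases Nat.eq_zero_or_pos (∑ e, a e) with h0 | h0
      · have : a = 0 := by
          funext e
          exact (Finset.sum_eq_zero_iff.1 h0) e (Finset.mem_univ _)
        rw [h0, this, pow_zero]
        exact_mod_cast hw0
      · set n := ∑ e, a e with hn
        have h2 := hsub.lim_le_div hbdd h0.ne'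
        have hn0 : (0 : ℝ) < n := by exact_mod_cast h0
        rw [le_div_iff₀ hn0] at h2
        have h3 : Real.log (G n) ≤ n * (-l) := by simp only [hu] at h2; linarith
        calc (w a : ℝ) ≤ G n := by exact_mod_cast hwG a
          _ = Real.exp (Real.log (G n)) := (Real.exp_log (by linarith [hG1' n])).symm
          _ ≤ Real.exp (n * (-l)) := Real.exp_le_exp.2 h3
          _ = _ := Real.exp_nat_mul _ _
    have hq : ENNReal.ofReal (Real.exp (-l) / γ) < 1 := by
      rw [ENNReal.ofReal_lt_one, div_lt_one hγ]; exact hcon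
    refine tsum_pow_ne_top (E := E) _ hq ?_
    rw [eq_top_iff, ← hinf]
    refine ENNReal.tsum_le_tsum fun a => ?_
    rw [← ENNReal.ofReal_pow (by positivity), ← ENNReal.ofReal_natCast,
      ← ENNReal.ofReal_mul (by positivity), ← ENNReal.ofReal_pow (by positivity)]
    apply ENNReal.ofReal_le_ofReal
    calc (1 / γ) ^ (∑ e, a e) * (w a : ℝ) ≤ (1 / γ) ^ (∑ e, a e) * Real.exp (-l) ^ (∑ e, a e) := by
          gcongr; exact hwL a
      _ = _ := by rw [← mul_pow]; congr 1; ring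
  · rw [← Real.le_log_iff_exp_le hΓ]
    have h2 : Tendsto (fun n : ℕ => Real.log C / n + Real.log Γ) atTop (nhds (0 + Real.log Γ)) :=
      (tendsto_const_div_atTop_nhds_zero_nat _).add_const _
    rw [zero_add] at h2
    refine le_of_tendsto_of_tendsto hlim.neg h2 ?_
    filter_upwards [eventually_gt_atTop 0] with n hn
    have hn0 : (0 : ℝ) < n := by exact_mod_cast hn
    simp only [hu]
    rw [neg_div, neg_neg, div_le_iff₀ hn0, add_mul, div_mul_cancel₀ _ hn0.ne']
    linarith [hlogC n]

/-! ### Part 4: counting gridded permutations -/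

theorem exists_equiv_of_fib {A B C : Type} [Fintype A] [Fintype B] (f : A → C) (g : B → C)
    (h : ∀ c, (fib f c).card = (fib g c).card) : ∃ ψ : A ≃ B, ∀ x, g (ψ x) = f x := by
  have h' : ∀ c, Nonempty ({x // f x = c} ≃ {x // g x = c}) := by
    intro c
    rw [← Fintype.card_eq, Fintype.card_subtype, Fintype.card_subtype]
    exact h c
  let φ : ∀ c, {x // f x = c} ≃ {x // g x = c} := fun c => (h' c).some
  refine ⟨(Equiv.sigmaFiberEquiv f).symm.trans
    ((Equiv.sigmaCongrRight φ).trans (Equiv.sigmaFiberEquiv g)), fun x => ?_⟩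
  exact (φ (f x) ⟨x, rfl⟩).2

/-- Words with prescribed letter counts. -/
abbrev Words {P E I : Type} [Fintype P] (π : P → I) (col : E → I) (a : E → ℕ) : Type :=
  {F : P → E // (∀ p, col (F p) = π p) ∧ ∀ e, (fib F e).card = a e}

instance {P E I : Type} [Fintype P] [Fintype E] (π : P → I) (col : E → I) (a : E → ℕ) :
    Fintype (Words π col a) := by
  unfold Words; infer_instance

theorem words_sum {P E I : Type} [Fintype P] [Fintype E] (π : P → I) (col : E → I)
    (a : E → ℕ) (F : Words π col a) (i : I) : (fib π i).card = ∑ e ∈ fib col i, a e := by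
  rw [Finset.card_eq_sum_card_fiberwise (f := F.1) (t := fib col i)]
  · refine Finset.sum_congr rfl fun e he => ?_
    rw [← F.2.2 e]
    congr 1
    ext p
    simp only [Finset.mem_filter, mem_fib]
    constructor
    · exact fun h => h.2
    · intro h
      refine ⟨?_, h⟩
      rw [← F.2.1 p, h]; simpa using he
  · intro p hp
    have : π p = i := by simpa using hp
    simp [F.2.1 p, this]

theorem words_card_of {P E I : Type} [Fintype P] [Fintype E] [Fintype I] (π : P → I)
    (col : E → I) (a : E → ℕ) (F0 : Words π col a) :
    Fintype.card (Words π col a) = ∏ i, Nat.multinomial (fib col i) a := by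
  have hg : ∀ F : Words π col a, ∃ g : Equiv.Perm P, ∀ p, F0.1 (g p) = F.1 p := fun F =>
    exists_equiv_of_fib F.1 F0.1 fun e => by rw [F.2.2, F0.2.2]
  choose g hg using hg
  have hbij : Function.Bijective (fun x : Words π col a × {h : Equiv.Perm P // F0.1 ∘ h = F0.1} =>
      (⟨x.2.1 * g x.1, by
        funext p
        have h1 := congrFun x.2.2 (g x.1 p)
        simp only [Function.comp_apply, Equiv.Perm.mul_apply] at h1 ⊢
        rw [← F0.2.1, h1, hg, x.1.2.1]⟩ : {h : Equiv.Perm P // π ∘ h = π})) := by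
    constructor
    · rintro ⟨F, h⟩ ⟨F', h'⟩ heq
      have heq' : h.1 * g F = h'.1 * g F' := congrArg Subtype.val heq
      have hF : F = F' := by
        apply Subtype.ext
        funext p
        have h1 := congrFun h.2 (g F p)
        have h2 := congrFun h'.2 (g F' p)
        have h3 : h.1 (g F p) = h'.1 (g F' p) := by
          rw [← Equiv.Perm.mul_apply, heq', Equiv.Perm.mul_apply]
        simp only [Function.comp_apply] at h1 h2
        rw [← hg F p, ← hg F' p, ← h1, ← h2, h3]
      subst hF
      have := mul_right_cancel heq'
      simp [Subtype.ext this]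
    · rintro ⟨k, hk⟩
      have hF : (∀ p, col ((F0.1 ∘ k) p) = π p) ∧ ∀ e, (fib (F0.1 ∘ k) e).card = a e := by
        refine ⟨fun p => ?_, fun e => ?_⟩
        · rw [Function.comp_apply, F0.2.1]; exact congrFun hk p
        · rw [← F0.2.2 e]
          refine Finset.card_bij (fun p _ => k p) ?_ ?_ ?_
          · intro p hp; simpa using hp
          · intro p _ q _ h; exact k.injective h
          · intro q hq; exact ⟨k.symm q, by simpa using hq, by simp⟩
      refine ⟨(⟨F0.1 ∘ k, hF⟩, ⟨k * (g ⟨F0.1 ∘ k, hF⟩)⁻¹, ?_⟩), ?_⟩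
      · funext p
        have := hg ⟨F0.1 ∘ k, hF⟩ ((g ⟨F0.1 ∘ k, hF⟩).symm p)
        rw [Equiv.apply_symm_apply] at this
        exact this.symm
      · apply Subtype.ext
        simp
  have hcard := Fintype.card_of_bijective hbij
  rw [Fintype.card_prod, DomMulAct.stabilizer_card, DomMulAct.stabilizer_card] at hcard
  have h1 : ∀ e, Fintype.card {p // F0.1 p = e} = a e := fun e => by
    rw [Fintype.card_subtype, ← F0.2.2 e, fib]
  have h2 : ∀ i, Fintype.card {p // π p = i} = ∑ e ∈ fib col i, a e := fun i => by
    rw [Fintype.card_subtype, ← words_sum π col a F0 i, fib]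
  simp_rw [h1, h2] at hcard
  simp_rw [← Nat.multinomial_spec] at hcard
  rw [Finset.prod_mul_distrib] at hcard
  have h3 : ∏ i, ∏ e ∈ fib col i, (a e).factorial = ∏ e, (a e).factorial := by
    unfold fib
    exact Finset.prod_fiberwise _ _ _
  rw [h3, mul_comm] at hcard
  exact Nat.eq_of_mul_eq_mul_left (Finset.prod_pos fun e _ => Nat.factorial_pos _) hcard

theorem words_card_le {P E I : Type} [Fintype P] [Fintype E] [Fintype I] (π : P → I)
    (col : E → I) (a : E → ℕ) :
    Fintype.card (Words π col a) ≤ ∏ i, Nat.multinomial (fib col i) a := by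
  rcases isEmpty_or_nonempty (Words π col a) with h | ⟨⟨F⟩⟩
  · rw [Fintype.card_eq_zero]; exact Nat.zero_le _
  · rw [words_card_of π col a F]

theorem words_card {P E I : Type} [Fintype P] [Fintype E] [Fintype I] (π : P → I)
    (col : E → I) (a : E → ℕ) (h : ∀ i, (fib π i).card = ∑ e ∈ fib col i, a e) :
    Fintype.card (Words π col a) = ∏ i, Nat.multinomial (fib col i) a := by
  obtain ⟨ψ, hψ⟩ := exists_equiv_of_fib (B := Σ e, Fin (a e)) π (fun x => col x.1) (by
    intro i
    rw [h i, Finset.card_eq_sum_card_fiberwise (f := fun x : (Σ e, Fin (a e)) => x.1)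
      (t := fib col i)]
    · refine Finset.sum_congr rfl fun e he => ?_
      rw [mem_fib] at he
      have : Finset.filter (fun x : (Σ e, Fin (a e)) => x.1 = e) (fib (fun x => col x.1) i) =
          Finset.univ.map ⟨fun y : Fin (a e) => (⟨e, y⟩ : Σ e, Fin (a e)), by
            intro y y' h; simpa using h⟩ := by
        ext ⟨e', y⟩
        simp only [Finset.mem_filter, mem_fib, Finset.mem_map, Finset.mem_univ, true_and]
        constructor
        · rintro ⟨_, h2⟩
          subst h2
          exact ⟨y, rfl⟩
        · rintro ⟨y', h2⟩
          have : e = e' := congrArg Sigma.fst h2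
          subst this
          exact ⟨he, rfl⟩
      rw [this]; simp
    · intro x hx
      simpa using hx)
  refine words_card_of π col a ⟨fun p => (ψ p).1, hψ, fun e => ?_⟩
  rw [← Fintype.card_fin (a e), ← Finset.card_univ]
  symm
  refine Finset.card_bij (fun y _ => ψ.symm ⟨e, y⟩) ?_ ?_ ?_
  · intro y _; simp
  · intro y _ y' _ h; simpa using h
  · intro p hp
    rw [mem_fib] at hp
    subst hp
    exact ⟨(ψ p).2, Finset.mem_univ _, by simp⟩

/-- The index of the block containing a point. -/
theorem exists_block {t n : ℕ} (c : Fin (t + 1) → ℕ) (hc : Monotone c) (h0 : c 0 = 0)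
    (hl : c (Fin.last t) = n) : ∃ π : Fin n → Fin t,
      (∀ p i, π p = i ↔ c i.castSucc ≤ (p : ℕ) ∧ (p : ℕ) < c i.succ) ∧
      ∀ i, (fib π i).card = c i.succ - c i.castSucc := by
  have hex : ∀ p : Fin n, ∃ i : Fin t, c i.castSucc ≤ (p : ℕ) ∧ (p : ℕ) < c i.succ := by
    intro p
    by_contra hcon
    push Not at hcon
    have : ∀ j : Fin (t + 1), c j ≤ p := by
      intro j
      induction j using Fin.induction with
      | zero => omega
      | succ i ih => exact hcon i ih
    have := this (Fin.last t)
    have := p.2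
    omega
  choose π hπ using hex
  have hiff : ∀ p i, π p = i ↔ c i.castSucc ≤ (p : ℕ) ∧ (p : ℕ) < c i.succ := by
    intro p i
    constructor
    · rintro rfl; exact hπ p
    · rintro ⟨h1, h2⟩
      obtain ⟨h3, h4⟩ := hπ p
      rcases lt_trichotomy (π p) i with h | h | h
      · have := hc (show (π p).succ ≤ i.castSucc from by
          rw [Fin.le_def]; simp only [Fin.val_succ, Fin.val_castSucc]; exact h)
        omega
      · exact h
      · have := hc (show i.succ ≤ (π p).castSucc from by
          rw [Fin.le_def]; simp only [Fin.val_succ, Fin.val_castSucc]; exact h)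
        omega
  refine ⟨π, hiff, fun i => ?_⟩
  rw [← Nat.card_Ico, ← Finset.card_map Fin.valEmbedding]
  congr 1
  ext m
  simp only [Finset.mem_map, mem_fib, hiff, Fin.valEmbedding_apply, Finset.mem_Ico]
  constructor
  · rintro ⟨p, hp, rfl⟩; exact hp
  · intro hm
    have := hc (Fin.le_last i.succ)
    exact ⟨⟨m, by omega⟩, hm, rfl⟩

theorem exists_dividers {t n : ℕ} (N : Fin t → ℕ) (hN : ∑ i, N i = n) :
    ∃ c : Fin (t + 1) → ℕ, Monotone c ∧ c 0 = 0 ∧ c (Fin.last t) = n ∧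
      ∀ i : Fin t, c i.succ - c i.castSucc = N i := by
  set N' : ℕ → ℕ := fun x => if h : x < t then N ⟨x, h⟩ else 0 with hN'
  refine ⟨fun j => ∑ x ∈ Finset.range j, N' x, ?_, by simp, ?_, ?_⟩
  · intro j j' h
    exact Finset.sum_le_sum_of_subset (Finset.range_mono h)
  · simp only [Fin.val_last]
    rw [Finset.sum_range, ← hN]
    refine Finset.sum_congr rfl fun i _ => ?_
    simp [hN']
  · intro i
    simp [hN', Finset.sum_range_succ]

/-- The matrix of a bipartite graph. -/
def matM {E : Type} {t u : ℕ} (col : E → Fin t) (row : E → Fin u) : Fin t → Fin u → ℤ :=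
  fun i j => if ∃ e, col e = i ∧ row e = j then 1 else 0

theorem wt_le_gridCount {E : Type} [Fintype E] {t u : ℕ} (col : E → Fin t) (row : E → Fin u)
    (hinj : Function.Injective (fun e => (col e, row e))) (a : E → ℕ) :
    wt col row a ≤ gridCount (matM col row) (∑ e, a e) := by
  set n := ∑ e, a e with hn
  have hsc : ∑ i, ∑ e ∈ fib col i, a e = n := by
    unfold fib
    rw [hn, ← Finset.sum_fiberwise Finset.univ col a]
    congr!
  have hsr : ∑ j, ∑ e ∈ fib row j, a e = n := by
    unfold fib
    rw [hn, ← Finset.sum_fiberwise Finset.univ row a]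
    congr!
  obtain ⟨c, hc, hc0, hcl, hcN⟩ := exists_dividers (fun i => ∑ e ∈ fib col i, a e) hsc
  obtain ⟨r, hr, hr0, hrl, hrN⟩ := exists_dividers (fun j => ∑ e ∈ fib row j, a e) hsr
  obtain ⟨π, hπ, hπc⟩ := exists_block c hc hc0 hcl
  obtain ⟨ρ, hρ, hρc⟩ := exists_block r hr hr0 hrl
  have hcell : ∀ (σ : Equiv.Perm (Fin n)) i j p, InCell σ c r i j p ↔ π p = i ∧ ρ (σ p) = j := by
    intro σ i j p
    rw [hπ, hρ, InCell, and_assoc]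
  unfold wt
  rw [← words_card π col a (fun i => by rw [hπc, hcN]),
    ← words_card ρ row a (fun i => by rw [hρc, hrN]), ← Fintype.card_prod, gridCount,
    Nat.card_eq_fintype_card]
  have hσ : ∀ x : Words π col a × Words ρ row a, ∃ σ : Equiv.Perm (Fin n),
      (∀ p, x.2.1 (σ p) = x.1.1 p) ∧ ∀ p q, x.1.1 p = x.1.1 q → p < q → σ p < σ q := by
    rintro ⟨H, V⟩
    have hf : ∀ e, ∃ f : Fin n → Fin n, (∀ p, H.1 p = e → V.1 (f p) = e) ∧
        ∀ p q, H.1 p = e → H.1 q = e → p < q → f p < f q := by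
      intro e
      let o : {p // p ∈ fib H.1 e} ≃o {p // p ∈ fib V.1 e} :=
        ((fib H.1 e).orderIsoOfFin (H.2.2 e)).symm.trans ((fib V.1 e).orderIsoOfFin (V.2.2 e))
      refine ⟨fun p => if h : p ∈ fib H.1 e then (o ⟨p, h⟩).1 else p, ?_, ?_⟩
      · intro p hp
        have hp' : p ∈ fib H.1 e := by simpa using hp
        simp only [hp', dif_pos]
        exact (mem_fib _ _ _).1 (o ⟨p, hp'⟩).2
      · intro p q hp hq hpq
        have hp' : p ∈ fib H.1 e := by simpa using hp
        have hq' : q ∈ fib H.1 e := by simpa using hq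
        simp only [hp', hq', dif_pos]
        exact o.strictMono (show (⟨p, hp'⟩ : {p // p ∈ fib H.1 e}) < ⟨q, hq'⟩ from hpq)
    choose f hf1 hf2 using hf
    have hV : ∀ p, V.1 (f (H.1 p) p) = H.1 p := fun p => hf1 _ p rfl
    have hlt : ∀ p q, H.1 p = H.1 q → p < q → f (H.1 p) p < f (H.1 q) q := by
      intro p q h hpq
      rw [h]
      exact hf2 _ p q h rfl hpq
    have hi : Function.Injective (fun p => f (H.1 p) p) := by
      intro p q h
      have h1 : H.1 p = H.1 q := by
        rw [← hV p, ← hV q]; exact congrArg V.1 h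
      rcases lt_trichotomy p q with h2 | h2 | h2
      · exact absurd h (hlt p q h1 h2).ne
      · exact h2
      · exact absurd h (hlt q p h1.symm h2).ne'
    exact ⟨Equiv.ofBijective _ (Finite.injective_iff_bijective.1 hi), hV, hlt⟩
  choose S hS1 hS2 using hσ
  refine Fintype.card_le_of_injective (fun x => ⟨S x, c, r, hc, hr, hc0, hcl, hr0, hrl, ?_⟩) ?_
  · intro i j
    refine ⟨?_, ?_, ?_⟩
    · intro hM p hp
      rw [hcell] at hp
      have : ∃ e, col e = i ∧ row e = j := by
        refine ⟨x.1.1 p, ?_, ?_⟩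
        · rw [x.1.2.1, hp.1]
        · rw [← hS1 x p, x.2.2.1, hp.2]
      simp [matM, this] at hM
    · intro _ p q hp hq hpq
      rw [hcell] at hp hq
      refine hS2 x p q (hinj (Prod.ext ?_ ?_)) hpq
      · change col (x.1.1 p) = col (x.1.1 q)
        rw [x.1.2.1, x.1.2.1, hp.1, hq.1]
      · change row (x.1.1 p) = row (x.1.1 q)
        rw [← hS1 x p, ← hS1 x q, x.2.2.1, x.2.2.1, hp.2, hq.2]
    · intro hM
      unfold matM at hM
      split_ifs at hM <;> omega
  · intro x y h
    have h' : S x = S y := congrArg Subtype.val h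
    have hH : ∀ p, x.1.1 p = y.1.1 p := by
      intro p
      apply hinj
      refine Prod.ext ?_ ?_
      · change col (x.1.1 p) = col (y.1.1 p)
        rw [x.1.2.1, y.1.2.1]
      · change row (x.1.1 p) = row (y.1.1 p)
        rw [← hS1 x p, ← hS1 y p, x.2.2.1, y.2.2.1, h']
    refine Prod.ext (Subtype.ext (funext hH)) (Subtype.ext (funext fun v => ?_))
    have h1 := hS1 x ((S x).symm v)
    have h2 := hS1 y ((S x).symm v)
    rw [Equiv.apply_symm_apply] at h1
    rw [← h', Equiv.apply_symm_apply] at h2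
    rw [h1, h2, hH]

theorem perm_unique {n : ℕ} {E : Type} (H : Fin n → E) (σ τ : Equiv.Perm (Fin n))
    (hσ : ∀ p q, H p = H q → p < q → σ p < σ q) (hτ : ∀ p q, H p = H q → p < q → τ p < τ q)
    (h : ∀ v, H (σ.symm v) = H (τ.symm v)) : σ = τ := by
  have key : ∀ σ τ : Equiv.Perm (Fin n), (∀ p q, H p = H q → p < q → σ p < σ q) →
      (∀ p q, H p = H q → p < q → τ p < τ q) → (∀ v, H (σ.symm v) = H (τ.symm v)) →
      ∀ p, p ≤ τ.symm (σ p) := by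
    intro σ τ hσ hτ h p
    have hH : ∀ q, H (τ.symm (σ q)) = H q := fun q => by
      rw [← h, Equiv.symm_apply_apply]
    let f : {q // H q = H p} → {q // H q = H p} := fun q => ⟨τ.symm (σ q.1), by rw [hH, q.2]⟩
    have hf : StrictMono f := by
      rintro ⟨q, hq⟩ ⟨q', hq'⟩ hlt
      have h1 : q < q' := hlt
      have h2 := hσ q q' (by rw [hq, hq']) h1
      change τ.symm (σ q) < τ.symm (σ q')
      by_contra hcon
      push Not at hcon
      rcases hcon.lt_or_eq with h3 | h3
      · have h4 := hτ _ _ (by rw [hH, hH, hq, hq']) h3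
        rw [Equiv.apply_symm_apply, Equiv.apply_symm_apply] at h4
        exact absurd h2 h4.not_gt
      · have := σ.injective (τ.symm.injective h3)
        exact absurd this h1.ne'
    exact hf.le_apply (x := ⟨p, rfl⟩)
  ext1 p
  have h1 := key σ τ hσ hτ h p
  have h2 := key τ σ hτ hσ (fun v => (h v).symm) (τ.symm (σ p))
  rw [Equiv.apply_symm_apply, Equiv.symm_apply_apply] at h2
  have h3 : τ.symm (σ p) = p := le_antisymm h2 h1
  rw [← h3, Equiv.apply_symm_apply, h3]

theorem gridCount_le {E : Type} [Fintype E] {t u : ℕ} (col : E → Fin t) (row : E → Fin u)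
    (n B : ℕ) (hB : ∀ a : E → ℕ, ∑ e, a e = n → wt col row a ≤ B) :
    gridCount (matM col row) n ≤ (n + 1) ^ ((t + 1) + (u + 1) + Fintype.card E) * B := by
  have hH : ∀ x : {σ : Equiv.Perm (Fin n) // InGridClass (matM col row) σ},
      ∃ (c : Fin (t + 1) → Fin (n + 1)) (r : Fin (u + 1) → Fin (n + 1)) (H : Fin n → E),
        IsGridding (matM col row) x.1 (fun i => (c i : ℕ)) (fun i => (r i : ℕ)) ∧
        ∀ p, InCell x.1 (fun i => (c i : ℕ)) (fun i => (r i : ℕ)) (col (H p)) (row (H p)) p := by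
    rintro ⟨σ, c, r, hg⟩
    obtain ⟨hc, hr, hc0, hcl, hr0, hrl, hM⟩ := id hg
    obtain ⟨π, hπ, -⟩ := exists_block c hc hc0 hcl
    obtain ⟨ρ, hρ, -⟩ := exists_block r hr hr0 hrl
    have hex : ∀ p, ∃ e, col e = π p ∧ row e = ρ (σ p) := by
      intro p
      by_contra hcon
      refine (hM (π p) (ρ (σ p))).1 (by simp only [matM, hcon, if_false]) p ?_
      have h1 := (hπ p _).1 rfl
      have h2 := (hρ (σ p) _).1 rfl
      exact ⟨h1.1, h1.2, h2.1, h2.2⟩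
    choose H hH1 hH2 using hex
    refine ⟨fun i => ⟨c i, ?_⟩, fun i => ⟨r i, ?_⟩, H, hg, fun p => ?_⟩
    · have := hc (Fin.le_last i); omega
    · have := hr (Fin.le_last i); omega
    · rw [hH1, hH2]
      have h1 := (hπ p _).1 rfl
      have h2 := (hρ (σ p) _).1 rfl
      exact ⟨h1.1, h1.2, h2.1, h2.2⟩
  choose c r H hg hcell using hH
  set Φ : {σ : Equiv.Perm (Fin n) // InGridClass (matM col row) σ} →
      ((Fin (t + 1) → Fin (n + 1)) × (Fin (u + 1) → Fin (n + 1))) × (E → Fin (n + 1)) :=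
    fun x => ((c x, r x), fun e => ⟨(fib (H x) e).card, by
      have := Finset.card_le_univ (fib (H x) e)
      rw [Fintype.card_fin] at this; omega⟩) with hΦ
  have hcardY : Fintype.card (((Fin (t + 1) → Fin (n + 1)) × (Fin (u + 1) → Fin (n + 1))) ×
      (E → Fin (n + 1))) = (n + 1) ^ ((t + 1) + (u + 1) + Fintype.card E) := by
    simp [pow_add]
  rw [← hcardY, gridCount, Nat.card_eq_fintype_card, ← Finset.card_univ, ← Finset.card_univ,
    mul_comm]
  refine Finset.card_le_mul_card_image_of_maps_to (f := Φ) (fun _ _ => Finset.mem_univ _) B ?_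
  rintro ⟨⟨c0, r0⟩, a0⟩ -
  rcases Finset.eq_empty_or_nonempty (Finset.univ.filter (fun x => Φ x = ((c0, r0), a0))) with
    h0 | ⟨x0, hx0⟩
  · rw [h0]; simp
  have hx0' : Φ x0 = ((c0, r0), a0) := by simpa using hx0
  have hcx : c x0 = c0 := congrArg (fun y => y.1.1) hx0'
  have hrx : r x0 = r0 := congrArg (fun y => y.1.2) hx0'
  obtain ⟨hc, hr, hc0, hcl, hr0, hrl, -⟩ := hg x0
  rw [hcx] at hc hc0 hcl
  rw [hrx] at hr hr0 hrl
  obtain ⟨π, hπ, -⟩ := exists_block _ hc hc0 hcl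
  obtain ⟨ρ, hρ, -⟩ := exists_block _ hr hr0 hrl
  have hsum : ∑ e, ((a0 e : Fin (n + 1)) : ℕ) = n := by
    have h1 : ∀ e, ((a0 e : Fin (n + 1)) : ℕ) = (fib (H x0) e).card := fun e => by
      have : a0 = _ := (congrArg Prod.snd hx0').symm
      rw [this]
    simp_rw [h1]
    have := Finset.card_eq_sum_card_fiberwise (f := H x0) (s := Finset.univ) (t := Finset.univ)
      (fun _ _ => Finset.mem_univ _)
    rw [Finset.card_univ, Fintype.card_fin] at this
    exact this.symm
  refine le_trans ?_ (hB _ hsum)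
  refine le_trans ?_ (Nat.mul_le_mul (words_card_le π col _) (words_card_le ρ row _))
  rw [← Fintype.card_prod, ← Fintype.card_coe]
  have hprop : ∀ x : {x // x ∈ Finset.univ.filter (fun x => Φ x = ((c0, r0), a0))},
      (∀ p, col (H x.1 p) = π p) ∧ (∀ p, row (H x.1 p) = ρ (x.1.1 p)) ∧
      ∀ e, (fib (H x.1) e).card = a0 e := by
    rintro ⟨x, hx⟩
    have hx' : Φ x = ((c0, r0), a0) := by simpa using hx
    have hcx : c x = c0 := congrArg (fun y => y.1.1) hx'
    have hrx : r x = r0 := congrArg (fun y => y.1.2) hx'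
    have ha : a0 = _ := (congrArg Prod.snd hx').symm
    refine ⟨fun p => ?_, fun p => ?_, fun e =>
      (congrArg (fun f => ((f e : Fin (n + 1)) : ℕ)) ha).symm⟩
    · have := hcell x p
      rw [hcx] at this
      exact ((hπ p _).2 ⟨this.1, this.2.1⟩).symm
    · have := hcell x p
      rw [hrx] at this
      exact ((hρ _ _).2 ⟨this.2.2.1, this.2.2.2⟩).symm
  refine Fintype.card_le_of_injective (fun x =>
    (⟨H x.1, (hprop x).1, (hprop x).2.2⟩, ⟨fun v => H x.1 (x.1.1.symm v), ?_, ?_⟩)) ?_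
  · intro v
    rw [(hprop x).2.1, Equiv.apply_symm_apply]
  · intro e
    refine Eq.trans ?_ ((hprop x).2.2 e)
    refine Finset.card_bij (fun v _ => x.1.1.symm v) ?_ ?_ ?_
    · intro p hp; simpa using hp
    · intro p _ q _ h; exact x.1.1.symm.injective h
    · intro q hq; exact ⟨x.1.1 q, by simpa using hq, by simp⟩
  · intro x y hxy
    have hHeq : H x.1 = H y.1 := congrArg (fun z => z.1.1) hxy
    have hVeq : (fun v => H x.1 (x.1.1.symm v)) = fun v => H y.1 (y.1.1.symm v) :=
      congrArg (fun z => z.2.1) hxy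
    have hmono : ∀ z : {σ : Equiv.Perm (Fin n) // InGridClass (matM col row) σ},
        ∀ p q, H z p = H z q → p < q → z.1 p < z.1 q := by
      intro z p q hpq hlt
      obtain ⟨-, -, -, -, -, -, hM⟩ := hg z
      refine (hM (col (H z p)) (row (H z p))).2.1 ?_ p q (hcell z p) ?_ hlt
      · have : ∃ e, col e = col (H z p) ∧ row e = row (H z p) := ⟨_, rfl, rfl⟩
        simp only [matM, this, if_true]
      · rw [hpq]; exact hcell z q
    apply Subtype.ext
    apply Subtype.ext
    refine perm_unique (H x.1) _ _ (hmono x.1) ?_ ?_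
    · rw [hHeq]; exact hmono y.1
    · intro v
      have := congrFun hVeq v
      rw [this, hHeq]

/-! ### Part 5: conclusion -/

theorem wt_equiv {E I J I' J' : Type} [Fintype E] [Fintype I] [Fintype J] [Fintype I']
    [Fintype J'] (φ : I ≃ I') (ψ : J ≃ J') (col : E → I) (row : E → J) (a : E → ℕ) :
    wt (φ ∘ col) (ψ ∘ row) a = wt col row a := by
  unfold wt
  rw [← Equiv.prod_comp φ, ← Equiv.prod_comp ψ]
  have h1 : ∀ i, fib (φ ∘ col) (φ i) = fib col i := fun i => by ext e; simp
  have h2 : ∀ i, fib (ψ ∘ row) (ψ i) = fib row i := fun i => by ext e; simp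
  simp_rw [h1, h2]

theorem TT_ne_zero (N : ℕ → ℕ) (z : ENNReal) (k : ℕ) : TT N z k ≠ 0 := by
  cases k with
  | zero => simp [TT]
  | succ k =>
    simp only [TT]
    rw [Ne, ENNReal.inv_eq_zero]
    exact ne_top_of_le_ne_top ENNReal.one_ne_top tsub_le_self

/-- For every `γ ≥ 2 + √5` and `ε > 0` there is a monotone grid class whose growth rate
exists and lies within `ε` of `γ`. -/
theorem grid_growth_rates_dense (γ : ℝ) (hγ : 2 + Real.sqrt 5 ≤ γ) (ε : ℝ) (hε : 0 < ε) :
    ∃ (t u : ℕ), 1 ≤ t ∧ 1 ≤ u ∧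
      ∃ M : Fin t → Fin u → ℤ,
        (∀ i j, M i j = 0 ∨ M i j = 1 ∨ M i j = -1) ∧
        ∃ g : ℝ,
          Tendsto (fun n : ℕ => (gridCount M n : ℝ) ^ (1 / (n : ℝ))) atTop (nhds g) ∧
          |g - γ| < ε := by
  have hγ0 : 0 < γ := by have := Real.sqrt_nonneg 5; linarith
  obtain ⟨N, k, hfin, hinf⟩ := greedy_exists γ (γ + ε / 2) hγ (by linarith)
  have hk : 0 < k := by
    rcases Nat.eq_zero_or_pos k with h | h
    · subst h; simp [TT] at hinf
    · exact h
  obtain ⟨E, I, J, _, _, _, col, row, root, hinj, hne, hsum⟩ := tree_exists N k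
  have hE : Nonempty E := hne hk
  have hI : Nonempty I := ⟨root⟩
  have hJ : Nonempty J := hE.map row
  set φ := Fintype.equivFin I
  set ψ := Fintype.equivFin J
  have hinj' : Function.Injective (fun e => ((φ ∘ col) e, (ψ ∘ row) e)) := by
    intro e e' h
    simp only [Prod.mk.injEq, Function.comp_apply, EmbeddingLike.apply_eq_iff_eq] at h
    exact hinj (Prod.ext h.1 h.2)
  have hsum' : ∀ z : ENNReal, ∑' a : E → ℕ, z ^ (∑ e, a e) *
      ((wt (φ ∘ col) (ψ ∘ row) a : ℕ) : ENNReal) = ∏ i ∈ Finset.range (k + 1), TT N z i := by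
    intro z
    have := hsum z 0
    simp only [Nat.choose_zero_right, Nat.cast_one, mul_one, pow_zero] at this
    simp_rw [wt_equiv]
    exact this
  obtain ⟨L, hL, h1, h2⟩ := fekete_growth (wt (φ ∘ col) (ψ ∘ row)) (fun a => wt_pos _ _ a)
    (fun a b => wt_add _ _ a b) (gridCount (matM (φ ∘ col) (ψ ∘ row)))
    (fun a => wt_le_gridCount _ _ hinj' a) _ (fun n B hB => gridCount_le _ _ n B hB)
    γ (γ + ε / 2) hγ0 (by linarith)
    (by rw [hsum']; exact ENNReal.prod_ne_top fun i _ => hfin i)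
    (by
      rw [hsum', Finset.prod_range_succ, hinf]
      exact ENNReal.mul_top (Finset.prod_ne_zero_iff.2 fun i _ => TT_ne_zero _ _ _))
  refine ⟨_, _, Fintype.card_pos, Fintype.card_pos, matM (φ ∘ col) (ψ ∘ row), ?_, L, hL, ?_⟩
  · intro i j
    unfold matM
    split_ifs <;> simp
  · rw [abs_lt]; constructor <;> linarith
end
end

section
/- Let M be a matrix with t ≥ 1 columns and u ≥ 1 rows and entries in {0, 1, −1}. Then the matching polynomial of the row-column graph G(M^{×2}) of the double refinement of M has a greatest real root μ, and the limit lim_{n→∞} |Geom_n(M)|^{1/n} exists and equals μ². -/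
noncomputable section

open Filter

open scoped Classical

/-- The standard figure `Λ_M ⊆ ℝ²` of a 0/±1 matrix `M`: a union of open oblique line
segments, one for each nonzero cell, with slope given by the entry. -/
def stdFigure {t u : ℕ} (M : Fin t → Fin u → ℤ) : Set (ℝ × ℝ) :=
  {p : ℝ × ℝ | ∃ (i : Fin t) (j : Fin u) (s : ℝ), 0 < s ∧ s < 1 ∧
    ((M i j = 1 ∧ p = (((i : ℕ) : ℝ) + s, ((j : ℕ) : ℝ) + s)) ∨
      (M i j = -1 ∧ p = (((i : ℕ) : ℝ) + s, ((j : ℕ) : ℝ) + 1 - s)))}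

/-- Membership in the geometric grid class `Geom(M)`: the permutation can be plotted on the
standard figure of `M`. -/
def InGeomClass {t u : ℕ} (M : Fin t → Fin u → ℤ) {n : ℕ} (σ : Equiv.Perm (Fin n)) : Prop :=
  ∃ f : Fin n → ℝ × ℝ, (∀ p, f p ∈ stdFigure M) ∧
    (∀ a b : Fin n, a < b → (f a).1 < (f b).1) ∧
    ∀ a b : Fin n, (f a).2 < (f b).2 ↔ σ a < σ b

/-- `|Geom_n(M)|`, the number of permutations of length `n` in the geometric grid class. -/
def geomCount {t u : ℕ} (M : Fin t → Fin u → ℤ) (n : ℕ) : ℕ :=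
  Nat.card {σ : Equiv.Perm (Fin n) // InGeomClass M σ}

/-- The double refinement `M^{×2}` of `M`: replace each entry by a 2×2 block; `1` becomes the
block with 1s in the lower-left and upper-right cells, `-1` the block with -1s in the
upper-left and lower-right cells. -/
def doubleRefine {t u : ℕ} (M : Fin t → Fin u → ℤ) : Fin (2 * t) → Fin (2 * u) → ℤ :=
  fun i j =>
    if M ⟨(i : ℕ) / 2, by have := i.isLt; omega⟩ ⟨(j : ℕ) / 2, by have := j.isLt; omega⟩
        = 1 then
      (if (i : ℕ) % 2 = (j : ℕ) % 2 then 1 else 0)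
    else if M ⟨(i : ℕ) / 2, by have := i.isLt; omega⟩ ⟨(j : ℕ) / 2, by have := j.isLt; omega⟩
        = -1 then
      (if (i : ℕ) % 2 = (j : ℕ) % 2 then 0 else -1)
    else 0

/-- The row-column graph `G(M)`. -/
def rowColGraph {t u : ℕ} (M : Fin t → Fin u → ℤ) : SimpleGraph (Fin t ⊕ Fin u) :=
  SimpleGraph.fromRel fun x y =>
    ∃ (i : Fin t) (j : Fin u), x = Sum.inl i ∧ y = Sum.inr j ∧ M i j ≠ 0

/-- `m_k(G)`: the number of `k`-matchings of `G` (sets of `k` edges, pairwise disjoint). -/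
def matchingNumber {V : Type*} [Fintype V] [DecidableEq V] (G : SimpleGraph V) (k : ℕ) : ℕ :=
  Nat.card {s : Finset (Sym2 V) // s.card = k ∧ (∀ e ∈ s, e ∈ G.edgeSet) ∧
    ∀ e ∈ s, ∀ f ∈ s, e ≠ f → ∀ v : V, ¬(v ∈ e ∧ v ∈ f)}

/-- The matching polynomial `μ_G(z) = Σ_k (-1)^k m_k(G) z^(n-2k)`. -/
def matchingPoly {V : Type*} [Fintype V] [DecidableEq V] (G : SimpleGraph V) : Polynomial ℝ :=
  ∑ k ∈ Finset.range (Fintype.card V / 2 + 1),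
    Polynomial.C ((-1 : ℝ) ^ k * (matchingNumber G k : ℝ)) *
      Polynomial.X ^ (Fintype.card V - 2 * k)

namespace GGR

section Trace

variable {E V : Type*}

/-- Two letters are dependent if they share a vertex. -/
def dep (inc : E → V → Prop) (e f : E) : Prop := ∃ v, inc e v ∧ inc f v

/-- The trace of a word: its projections on all the vertices. -/
def tr (inc : E → V → Prop) {n : ℕ} (w : Fin n → E) : V → List E :=
  fun v => (List.ofFn w).filter (fun e => decide (inc e v))

/-- Two words are similar if one is obtained from the other by a rearrangement preserving
the order of dependent letters. -/
def Sim (inc : E → V → Prop) {n : ℕ} (w w' : Fin n → E) : Prop :=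
  ∃ θ : Equiv.Perm (Fin n), (∀ k, w' (θ k) = w k) ∧
    ∀ k k', dep inc (w k) (w k') → (k < k' ↔ θ k < θ k')

theorem tr_eq_map (inc : E → V → Prop) {n : ℕ} (w : Fin n → E) (v : V) :
    tr inc w v = ((List.finRange n).filter (fun k => decide (inc (w k) v))).map w := by
  unfold tr
  rw [List.ofFn_eq_map, List.filter_map]
  rfl

theorem Sim.tr_eq {inc : E → V → Prop} {n : ℕ} {w w' : Fin n → E} (h : Sim inc w w') :
    tr inc w = tr inc w' := by
  obtain ⟨θ, h1, h2⟩ := h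
  funext v
  rw [tr_eq_map, tr_eq_map]
  have key : ((List.finRange n).filter (fun k => decide (inc (w k) v))).map θ
      = (List.finRange n).filter (fun k => decide (inc (w' k) v)) := by
    have s1 : (((List.finRange n).filter (fun k => decide (inc (w k) v))).map θ).Pairwise
        (· < ·) := by
      rw [List.pairwise_map]
      have := (List.pairwise_lt_finRange n).filter (fun k => decide (inc (w k) v))
      refine this.imp_of_mem ?_
      intro a b ha hb hab
      simp only [List.mem_filter, decide_eq_true_eq] at ha hb
      exact (h2 a b ⟨v, ha.2, hb.2⟩).1 hab
    have s2 := (List.pairwise_lt_finRange n).filter (fun k => decide (inc (w' k) v))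
    refine List.Perm.eq_of_pairwise (le := (· < ·)) (fun a b _ _ hab hba => absurd hab (not_lt_of_gt hba)) s1 s2 ?_
    rw [List.perm_ext_iff_of_nodup (s1.imp (fun h => ne_of_lt h)) (s2.imp (fun h => ne_of_lt h))]
    intro a
    simp only [List.mem_map, List.mem_filter, List.mem_finRange, true_and, decide_eq_true_eq]
    constructor
    · rintro ⟨b, hb, rfl⟩
      rw [h1]; exact hb
    · intro ha
      refine ⟨θ.symm a, ?_, by simp⟩
      rw [← h1]; simpa using ha
  rw [← key, List.map_map]
  congr 1
  funext k
  exact (h1 k).symm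

/-- Left multiplication of a trace by a letter. -/
def lmul (inc : E → V → Prop) (e : E) (ρ : V → List E) : V → List E :=
  fun v => if inc e v then e :: ρ v else ρ v

theorem tr_cons (inc : E → V → Prop) {n : ℕ} (e : E) (u : Fin n → E) :
    tr inc (Fin.cons e u : Fin (n + 1) → E) = lmul inc e (tr inc u) := by
  funext v
  unfold tr lmul
  rw [List.ofFn_cons, List.filter_cons]
  simp

theorem lmul_injective (inc : E → V → Prop) (e : E) : Function.Injective (lmul inc e) := by
  intro a b h
  funext v
  have := congrFun h v
  unfold lmul at this
  split_ifs at this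
  · exact (List.cons.inj this).2
  · exact this

/-- `e` is an initial letter of the trace. -/
def IsInit (inc : E → V → Prop) (ρ : V → List E) (e : E) : Prop :=
  ∀ v, inc e v → (ρ v).head? = some e

theorem isInit_lmul (inc : E → V → Prop) (ρ : V → List E) (e : E) :
    IsInit inc (lmul inc e ρ) e := by
  intro v hv
  simp [lmul, hv]

theorem isInit_lmul_iff {inc : E → V → Prop} (ρ : V → List E) {e f : E}
    (h : ¬ dep inc e f) : IsInit inc (lmul inc e ρ) f ↔ IsInit inc ρ f := by
  unfold IsInit lmul
  refine forall_congr' fun v => ?_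
  refine imp_congr_right fun hv => ?_
  rw [if_neg (fun he => h ⟨v, he, hv⟩)]

theorem indep_of_isInit {inc : E → V → Prop} {ρ : V → List E} {e f : E}
    (he : IsInit inc ρ e) (hf : IsInit inc ρ f) (hne : e ≠ f) : ¬ dep inc e f := by
  rintro ⟨v, h1, h2⟩
  have := (he v h1).symm.trans (hf v h2)
  exact hne (Option.some.inj this)

theorem exists_first {inc : E → V → Prop} (hinc : ∀ e, ∃ v, inc e v) {n : ℕ}
    (w : Fin n → E) {e : E} (h : IsInit inc (tr inc w) e) :
    ∃ p, w p = e ∧ ∀ j < p, ¬ dep inc e (w j) := by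
  have idx : ∀ v, inc e v → ∃ i, w i = e ∧ ∀ j < i, ¬ inc (w j) v := by
    intro v hv
    have h1 := h v hv
    unfold tr at h1
    rw [List.head?_filter, List.find?_eq_some_iff_getElem] at h1
    obtain ⟨_, i, hi, h2, h3⟩ := h1
    have hi' : i < n := by simpa using hi
    refine ⟨⟨i, hi'⟩, by simpa using h2, ?_⟩
    intro j hj
    have := h3 j.1 hj
    simpa using this
  have hex : ∃ p : Fin n, dep inc e (w p) := by
    obtain ⟨v, hv⟩ := hinc e
    obtain ⟨i, hi, _⟩ := idx v hv
    exact ⟨i, v, hv, hi ▸ hv⟩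
  have hne : (Finset.univ.filter fun p : Fin n => dep inc e (w p)).Nonempty := by
    obtain ⟨p, hp⟩ := hex
    exact ⟨p, by simpa using hp⟩
  obtain ⟨p, hp, hmin⟩ := Finset.exists_min_image _ id hne
  simp only [Finset.mem_filter, Finset.mem_univ, true_and, id] at hp hmin
  obtain ⟨v, hv, hpv⟩ := hp
  obtain ⟨i, hi, hi2⟩ := idx v hv
  have h1 : p ≤ i := hmin i ⟨v, hv, hi ▸ hv⟩
  have h2 : i ≤ p := by
    by_contra hc
    exact hi2 p (not_le.1 hc) hpv
  have : p = i := le_antisymm h1 h2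
  subst this
  refine ⟨p, hi, ?_⟩
  intro j hj hd
  exact absurd (hmin j hd) (not_le.2 hj)

theorem sim_extract {inc : E → V → Prop} {n : ℕ} (w : Fin (n + 1) → E) {e : E} {p : Fin (n + 1)}
    (hp : w p = e) (hj : ∀ j < p, ¬ dep inc e (w j)) :
    Sim inc (Fin.cons e (fun i => w (p.succAbove i)) : Fin (n + 1) → E) w := by
  obtain ⟨θ, hz, hs⟩ : ∃ θ : Equiv.Perm (Fin (n + 1)), θ 0 = p ∧
      ∀ i : Fin n, θ i.succ = p.succAbove i := by
    refine ⟨(finSuccEquiv' 0).trans (finSuccEquiv' p).symm, by simp, fun i => ?_⟩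
    have := finSuccEquiv'_succAbove (0 : Fin (n + 1)) i
    rw [Fin.succAbove_zero] at this
    rw [Equiv.trans_apply, this, finSuccEquiv'_symm_some]
  refine ⟨θ, ?_, ?_⟩
  · intro k
    refine Fin.cases ?_ (fun i => ?_) k
    · rw [hz]; simp [hp]
    · rw [hs]; simp
  · intro k k'
    refine Fin.cases ?_ (fun i => ?_) k <;> refine Fin.cases ?_ (fun i' => ?_) k'
    · simp
    · intro hd
      simp only [Fin.cons_zero, Fin.cons_succ] at hd
      have h0 : ¬ p.succAbove i' < p := fun h => hj _ h hd
      have h1 := Fin.succAbove_ne p i'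
      rw [hz, hs]
      simp only [Fin.succ_pos, true_iff]
      exact lt_of_le_of_ne (not_lt.1 h0) h1.symm
    · intro hd
      simp only [Fin.cons_zero, Fin.cons_succ] at hd
      have h0 : ¬ p.succAbove i < p := fun h => hj _ h (by obtain ⟨v, a, b⟩ := hd; exact ⟨v, b, a⟩)
      rw [hz, hs]
      simp only [Fin.not_lt_zero, false_iff]
      exact h0
    · intro _
      rw [hs, hs]
      simp

theorem exists_lmul {inc : E → V → Prop} (hinc : ∀ e, ∃ v, inc e v) {n : ℕ}
    (w : Fin (n + 1) → E) {e : E} (h : IsInit inc (tr inc w) e) :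
    ∃ u : Fin n → E, Sim inc (Fin.cons e u : Fin (n + 1) → E) w := by
  obtain ⟨p, hp, hj⟩ := exists_first hinc w h
  exact ⟨_, sim_extract w hp hj⟩

theorem Sim.trans {inc : E → V → Prop} {n : ℕ} {w w' w'' : Fin n → E} (h : Sim inc w w')
    (h' : Sim inc w' w'') : Sim inc w w'' := by
  obtain ⟨θ, h1, h2⟩ := h
  obtain ⟨φ, h3, h4⟩ := h'
  refine ⟨θ.trans φ, fun k => by simp [h3, h1], fun k k' hd => ?_⟩
  rw [h2 k k' hd]
  exact h4 _ _ (by rw [h1, h1]; exact hd)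

theorem Sim.cons {inc : E → V → Prop} {n : ℕ} {w w' : Fin n → E} (h : Sim inc w w') (e : E) :
    Sim inc (Fin.cons e w : Fin (n + 1) → E) (Fin.cons e w' : Fin (n + 1) → E) := by
  obtain ⟨θ, h1, h2⟩ := h
  refine ⟨Equiv.Perm.decomposeFin.symm (0, θ), ?_, ?_⟩
  · intro k
    refine Fin.cases ?_ (fun i => ?_) k
    · simp
    · simp [h1]
  · intro k k'
    refine Fin.cases ?_ (fun i => ?_) k <;> refine Fin.cases ?_ (fun i' => ?_) k'
    · simp
    · simp
    · simp
    · intro hd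
      simp only [Fin.cons_succ] at hd
      simpa using h2 i i' hd

theorem sim_of_tr_eq {inc : E → V → Prop} (hinc : ∀ e, ∃ v, inc e v) {n : ℕ} :
    ∀ (w w' : Fin n → E), tr inc w = tr inc w' → Sim inc w w' := by
  induction n with
  | zero => intro w w' _; exact ⟨1, fun k => k.elim0, fun k => k.elim0⟩
  | succ n ih =>
    intro w w' h
    obtain ⟨e, u, rfl⟩ : ∃ e u, w = (Fin.cons e u : Fin (n + 1) → E) :=
      ⟨w 0, Fin.tail w, (Fin.cons_self_tail w).symm⟩
    have hI : IsInit inc (tr inc w') e := by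
      rw [← h, tr_cons]; exact isInit_lmul _ _ _
    obtain ⟨u', hu'⟩ := exists_lmul hinc w' hI
    have h1 := hu'.tr_eq.trans h.symm
    rw [tr_cons, tr_cons] at h1
    have h2 := lmul_injective inc e h1
    exact ((ih u u' h2.symm).cons e).trans hu'

theorem tr_append (inc : E → V → Prop) {m n : ℕ} (w : Fin (m + n) → E) :
    tr inc w = fun v => tr inc (fun i => w (Fin.castAdd n i)) v
      ++ tr inc (fun i => w (Fin.natAdd m i)) v := by
  funext v
  unfold tr
  rw [← List.filter_append, List.ofFn_add]
  rfl

variable [Fintype E]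

/-- The set of traces of length `n`. -/
def T (inc : E → V → Prop) (n : ℕ) : Finset (V → List E) :=
  Finset.univ.image (fun w : Fin n → E => tr inc w)

theorem tr_mem_T (inc : E → V → Prop) {n : ℕ} (w : Fin n → E) : tr inc w ∈ T inc n :=
  Finset.mem_image_of_mem _ (Finset.mem_univ _)

theorem T_empty [hE : IsEmpty E] (inc : E → V → Prop) {n : ℕ} (hn : 0 < n) :
    (T inc n).card = 0 := by
  have : IsEmpty (Fin n → E) := ⟨fun w => hE.false (w ⟨0, hn⟩)⟩
  unfold T
  rw [Finset.univ_eq_empty, Finset.image_empty, Finset.card_empty]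

theorem T_submul (inc : E → V → Prop) (m n : ℕ) :
    (T inc (m + n)).card ≤ (T inc m).card * (T inc n).card := by
  rw [← Finset.card_product]
  refine (Finset.card_le_card (t := ((T inc m) ×ˢ (T inc n)).image
    (fun p v => p.1 v ++ p.2 v)) ?_).trans Finset.card_image_le
  intro ρ hρ
  simp only [T, Finset.mem_image, Finset.mem_univ, true_and, Finset.mem_product,
    Prod.exists] at hρ ⊢
  obtain ⟨w, rfl⟩ := hρ
  exact ⟨_, _, ⟨⟨_, rfl⟩, ⟨_, rfl⟩⟩, (tr_append inc w).symm⟩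

theorem T_pos [Nonempty E] (inc : E → V → Prop) (n : ℕ) : 0 < (T inc n).card := by
  rw [Finset.card_pos]
  exact Finset.univ_nonempty.image _

theorem T_zero (inc : E → V → Prop) : (T inc 0).card = 1 := by
  unfold T
  rw [Finset.univ_unique, Finset.image_singleton, Finset.card_singleton]

/-- Traces of length `n` with all letters of `S` initial. -/
def TS (inc : E → V → Prop) (n : ℕ) (S : Finset E) : Finset (V → List E) :=
  (T inc n).filter (fun ρ => ∀ e ∈ S, IsInit inc ρ e)

/-- Independent sets of letters. -/
def Indep (inc : E → V → Prop) (S : Finset E) : Prop :=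
  ∀ e ∈ S, ∀ f ∈ S, e ≠ f → ¬ dep inc e f

theorem TS_insert {inc : E → V → Prop} (hinc : ∀ e, ∃ v, inc e v) (n : ℕ) {S : Finset E} {e : E}
    (he : e ∉ S) (hS : Indep inc (insert e S)) :
    (TS inc (n + 1) (insert e S)).card = (TS inc n S).card := by
  have hind : ∀ f ∈ S, ¬ dep inc e f := fun f hf =>
    hS e (Finset.mem_insert_self _ _) f (Finset.mem_insert_of_mem hf) (fun h => he (h ▸ hf))
  rw [← Finset.card_image_of_injective (TS inc n S) (lmul_injective inc e)]
  congr 1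
  ext ρ
  simp only [TS, T, Finset.mem_image, Finset.mem_filter, Finset.mem_univ, true_and]
  constructor
  · rintro ⟨⟨w, rfl⟩, h⟩
    obtain ⟨u, hu⟩ := exists_lmul hinc w (h e (Finset.mem_insert_self _ _))
    have h1 := hu.tr_eq
    rw [tr_cons] at h1
    refine ⟨_, ⟨⟨u, rfl⟩, fun f hf => ?_⟩, h1⟩
    rw [← isInit_lmul_iff _ (hind f hf), h1]
    exact h f (Finset.mem_insert_of_mem hf)
  · rintro ⟨_, ⟨⟨u, rfl⟩, h⟩, rfl⟩
    refine ⟨⟨Fin.cons e u, tr_cons _ _ _⟩, fun f hf => ?_⟩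
    rcases Finset.mem_insert.1 hf with rfl | hf
    · exact isInit_lmul _ _ _
    · rw [isInit_lmul_iff _ (hind f hf)]
      exact h f hf

theorem not_isInit_zero {inc : E → V → Prop} (hinc : ∀ e, ∃ v, inc e v) (w : Fin 0 → E) (e : E) :
    ¬ IsInit inc (tr inc w) e := by
  intro h
  obtain ⟨p, _⟩ := exists_first hinc w h
  exact p.elim0

theorem TS_card {inc : E → V → Prop} (hinc : ∀ e, ∃ v, inc e v) (S : Finset E)
    (hS : Indep inc S) : ∀ n,
    (TS inc n S).card = if S.card ≤ n then (T inc (n - S.card)).card else 0 := by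
  induction S using Finset.induction_on with
  | empty => intro n; simp [TS]
  | insert e S he ih =>
    intro n
    have hS' : Indep inc S := fun a ha b hb => hS a (Finset.mem_insert_of_mem ha) b
      (Finset.mem_insert_of_mem hb)
    rw [Finset.card_insert_of_notMem he]
    cases n with
    | zero =>
      rw [if_neg (by omega), Finset.card_eq_zero]
      ext ρ
      simp only [TS, T, Finset.mem_image, Finset.mem_filter, Finset.mem_univ, true_and,
        Finset.notMem_empty, iff_false, not_and]
      rintro ⟨w, rfl⟩ h
      exact not_isInit_zero hinc w e (h e (Finset.mem_insert_self _ _))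
    | succ n =>
      rw [TS_insert hinc n he hS, ih hS']
      simp only [Nat.add_le_add_iff_right, Nat.add_sub_add_right]

theorem TS_dep {inc : E → V → Prop} (S : Finset E) (hS : ¬ Indep inc S) (n : ℕ) :
    (TS inc n S).card = 0 := by
  rw [Finset.card_eq_zero]
  ext ρ
  simp only [TS, Finset.mem_filter, Finset.notMem_empty, iff_false, not_and]
  intro _ h
  exact hS fun e he f hf hne => indep_of_isInit (h e he) (h f hf) hne

/-- Cartier-Foata. -/
theorem cartier_foata {inc : E → V → Prop} (hinc : ∀ e, ∃ v, inc e v) (n : ℕ) :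
    ∑ S ∈ Finset.univ.filter (fun S : Finset E => Indep inc S),
      (-1 : ℤ) ^ S.card * (if S.card ≤ n then ((T inc (n - S.card)).card : ℤ) else 0)
      = if n = 0 then 1 else 0 := by
  have h1 : ∑ S ∈ Finset.univ.filter (fun S : Finset E => Indep inc S),
      (-1 : ℤ) ^ S.card * (if S.card ≤ n then ((T inc (n - S.card)).card : ℤ) else 0)
      = ∑ S : Finset E, (-1 : ℤ) ^ S.card * ((TS inc n S).card : ℤ) := by
    rw [Finset.sum_filter]
    refine Finset.sum_congr rfl fun S _ => ?_
    split_ifs with h h2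
    · rw [TS_card hinc S h, if_pos h2]
    · rw [TS_card hinc S h, if_neg h2]; simp
    · rw [TS_dep S h]; simp
  rw [h1]
  have h2 : ∀ S : Finset E, ((TS inc n S).card : ℤ) =
      ∑ ρ ∈ T inc n, if S ⊆ Finset.univ.filter (fun e => IsInit inc ρ e) then 1 else 0 := by
    intro S
    unfold TS
    rw [Finset.card_filter]
    push_cast
    refine Finset.sum_congr rfl fun ρ _ => ?_
    congr 1
    simp [Finset.subset_iff]
  simp_rw [h2, Finset.mul_sum]
  rw [Finset.sum_comm]
  have h3 : ∀ ρ : V → List E, ∑ S : Finset E, (-1 : ℤ) ^ S.card *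
      (if S ⊆ Finset.univ.filter (fun e => IsInit inc ρ e) then 1 else 0)
      = if Finset.univ.filter (fun e => IsInit inc ρ e) = ∅ then 1 else 0 := by
    intro ρ
    rw [← Finset.sum_powerset_neg_one_pow_card]
    simp only [mul_ite, mul_one, mul_zero]
    rw [← Finset.sum_filter]
    refine Finset.sum_congr ?_ fun _ _ => rfl
    ext S
    simp
  simp_rw [h3]
  cases n with
  | zero =>
    have : ∀ ρ ∈ T inc 0, (if Finset.univ.filter (fun e => IsInit inc ρ e) = ∅ then (1 : ℤ) else 0)
        = 1 := by
      intro ρ hρ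
      simp only [T, Finset.mem_image, Finset.mem_univ, true_and] at hρ
      obtain ⟨w, rfl⟩ := hρ
      rw [if_pos]
      ext e
      simp [not_isInit_zero hinc w e]
    rw [Finset.sum_congr rfl this]
    simp [T_zero]
  | succ n =>
    rw [if_neg (by omega)]
    refine Finset.sum_eq_zero fun ρ hρ => ?_
    simp only [T, Finset.mem_image, Finset.mem_univ, true_and] at hρ
    obtain ⟨w, rfl⟩ := hρ
    rw [if_neg]
    intro hc
    have : w 0 ∈ Finset.univ.filter (fun e => IsInit inc (tr inc w) e) := by
      simp only [Finset.mem_filter, Finset.mem_univ, true_and]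
      rw [← Fin.cons_self_tail w, tr_cons]
      exact isInit_lmul _ _ _
    rw [hc] at this
    exact absurd this (Finset.notMem_empty _)

end Trace

section Analysis

theorem analytic_core {ι : Type*} (F : Finset ι) (κ : ι → ℕ) (a : ℕ → ℕ)
    (hpos : ∀ n, 0 < a n) (hsub : ∀ m n, a (m + n) ≤ a m * a n)
    (hcf : ∀ n, ∑ S ∈ F, (-1 : ℤ) ^ κ S * (if κ S ≤ n then (a (n - κ S) : ℤ) else 0)
      = if n = 0 then 1 else 0) :
    ∃ L : ℝ, 0 < L ∧ Tendsto (fun n : ℕ => (a n : ℝ) ^ (1 / (n : ℝ))) atTop (nhds L) ∧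
      (∑ S ∈ F, (-1 : ℝ) ^ κ S * (1 / L) ^ κ S = 0) ∧
      ∀ x : ℝ, 0 < x → x < 1 / L → 0 < ∑ S ∈ F, (-1 : ℝ) ^ κ S * x ^ κ S := by
  have hpos' : ∀ n, (0 : ℝ) < a n := fun n => by exact_mod_cast hpos n
  have hone : ∀ n, (1 : ℝ) ≤ a n := fun n => by exact_mod_cast hpos n
  have hS : Subadditive (fun n => Real.log (a n)) := by
    intro m n
    rw [← Real.log_mul (hpos' m).ne' (hpos' n).ne']
    exact Real.log_le_log (hpos' _) (by exact_mod_cast hsub m n)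
  have hbdd : BddBelow (Set.range fun n : ℕ => Real.log (a n) / n) := by
    refine ⟨0, ?_⟩
    rintro _ ⟨n, rfl⟩
    exact div_nonneg (Real.log_nonneg (hone n)) (Nat.cast_nonneg _)
  have hlim := hS.tendsto_lim hbdd
  set L := Real.exp hS.lim with hL
  have hL0 : 0 < L := Real.exp_pos _
  have hexp : Tendsto (fun n : ℕ => (a n : ℝ) ^ (1 / (n : ℝ))) atTop (nhds L) := by
    refine ((Real.continuous_exp.tendsto _).comp hlim).congr fun n => ?_
    rw [Function.comp, Real.rpow_def_of_pos (hpos' n)]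
    congr 1; ring
  have hlow : ∀ n, L ^ n ≤ a n := by
    intro n
    rcases Nat.eq_zero_or_pos n with rfl | hn
    · simpa using hone 0
    · have h1 := hS.lim_le_div hbdd hn.ne'
      have hn' : (0 : ℝ) < n := by exact_mod_cast hn
      rw [le_div_iff₀ hn'] at h1
      rw [hL, ← Real.exp_nat_mul, mul_comm]
      calc Real.exp (hS.lim * n) ≤ Real.exp (Real.log (a n)) := Real.exp_le_exp.2 h1
        _ = a n := Real.exp_log (hpos' n)
  have hmain : ∀ x : ℝ, 0 < x → x < 1 / L → 0 < ∑ S ∈ F, (-1 : ℝ) ^ κ S * x ^ κ S ∧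
      ∑ S ∈ F, (-1 : ℝ) ^ κ S * x ^ κ S ≤ 1 - L * x := by
    intro x hx hxL
    have hLx : L * x < 1 := by
      rw [lt_div_iff₀ hL0] at hxL; linarith
    have hsum : Summable (fun n => (a n : ℝ) * x ^ n) := by
      obtain ⟨r, hr1, hr2⟩ := exists_between ((lt_div_iff₀ hx).2 hLx)
      have hr0 : 0 < r := hL0.trans hr1
      have hrx : r * x < 1 := (lt_div_iff₀ hx).1 hr2
      refine Summable.of_norm_bounded_eventually_nat (g := fun n => (r * x) ^ n)
        (summable_geometric_of_lt_one (by positivity) hrx) ?_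
      filter_upwards [hexp.eventually (gt_mem_nhds hr1), eventually_gt_atTop 0] with n hn hn0
      rw [Real.norm_of_nonneg (by positivity), mul_pow]
      refine mul_le_mul_of_nonneg_right ?_ (by positivity)
      have h2 : ((a n : ℝ) ^ (1 / (n : ℝ))) ^ n ≤ r ^ n :=
        pow_le_pow_left₀ (by positivity) hn.le n
      rwa [one_div, Real.rpow_inv_natCast_pow (by positivity) hn0.ne'] at h2
    obtain ⟨T, hT⟩ := hsum
    have hgeo : HasSum (fun n => (L * x) ^ n) (1 - L * x)⁻¹ :=
      hasSum_geometric_of_lt_one (by positivity) hLx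
    have hTge : (1 - L * x)⁻¹ ≤ T := by
      refine hasSum_le (fun n => ?_) hgeo hT
      rw [mul_pow]
      exact mul_le_mul_of_nonneg_right (hlow n) (by positivity)
    have hT0 : 0 < T := lt_of_lt_of_le (inv_pos.2 (by linarith)) hTge
    have hshift : ∀ k : ℕ, HasSum (fun m => if k ≤ m then (a (m - k) : ℝ) * x ^ m else 0)
        (x ^ k * T) := by
      intro k
      have hinj : Function.Injective (fun n : ℕ => n + k) := add_left_injective k
      refine (hinj.hasSum_iff ?_).1 ?_
      · intro m hm
        rw [if_neg]
        intro hk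
        exact hm ⟨m - k, by simp; omega⟩
      · refine (hT.mul_left (x ^ k)).congr_fun ?_
        intro n
        simp [pow_add]; ring
    have hprod : HasSum (fun m => ∑ S ∈ F, (-1 : ℝ) ^ κ S *
        (if κ S ≤ m then (a (m - κ S) : ℝ) * x ^ m else 0))
        (∑ S ∈ F, (-1 : ℝ) ^ κ S * (x ^ κ S * T)) :=
      hasSum_sum fun S _ => (hshift (κ S)).mul_left _
    have hfun : (fun m => ∑ S ∈ F, (-1 : ℝ) ^ κ S *
        (if κ S ≤ m then (a (m - κ S) : ℝ) * x ^ m else 0)) = fun m => if m = 0 then 1 else 0 := by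
      funext m
      have h := hcf m
      have h' : ∑ S ∈ F, (-1 : ℝ) ^ κ S * (if κ S ≤ m then (a (m - κ S) : ℝ) else 0)
          = if m = 0 then 1 else 0 := by exact_mod_cast h
      have : ∑ S ∈ F, (-1 : ℝ) ^ κ S * (if κ S ≤ m then (a (m - κ S) : ℝ) * x ^ m else 0)
          = (∑ S ∈ F, (-1 : ℝ) ^ κ S * (if κ S ≤ m then (a (m - κ S) : ℝ) else 0)) * x ^ m := by
        rw [Finset.sum_mul]
        refine Finset.sum_congr rfl fun S _ => ?_
        split_ifs <;> ring
      rw [this, h']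
      split_ifs with h0
      · simp [h0]
      · simp
    rw [hfun] at hprod
    have h1 := (hasSum_ite_eq (0 : ℕ) (1 : ℝ)).unique hprod
    have h2 : (∑ S ∈ F, (-1 : ℝ) ^ κ S * x ^ κ S) * T = 1 := by
      refine Eq.trans ?_ h1.symm
      rw [Finset.sum_mul]
      exact Finset.sum_congr rfl fun S _ => by ring
    have h3 : ∑ S ∈ F, (-1 : ℝ) ^ κ S * x ^ κ S = T⁻¹ := eq_inv_of_mul_eq_one_left h2
    rw [h3]
    refine ⟨inv_pos.2 hT0, ?_⟩
    have := inv_anti₀ (inv_pos.2 (by linarith : 0 < 1 - L * x)) hTge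
    simpa using this
  refine ⟨L, hL0, hexp, ?_, fun x h1 h2 => (hmain x h1 h2).1⟩
  have hc : Continuous (fun x : ℝ => ∑ S ∈ F, (-1 : ℝ) ^ κ S * x ^ κ S) := by fun_prop
  have ht : Tendsto (fun x : ℝ => ∑ S ∈ F, (-1 : ℝ) ^ κ S * x ^ κ S)
      (nhdsWithin (1 / L) (Set.Iio (1 / L))) (nhds (∑ S ∈ F, (-1 : ℝ) ^ κ S * (1 / L) ^ κ S)) :=
    (hc.tendsto (1 / L)).mono_left nhdsWithin_le_nhds
  have hc2 : Continuous (fun x : ℝ => 1 - L * x) := by fun_prop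
  have ht2 : Tendsto (fun x : ℝ => 1 - L * x)
      (nhdsWithin (1 / L) (Set.Iio (1 / L))) (nhds (1 - L * (1 / L))) :=
    (hc2.tendsto (1 / L)).mono_left nhdsWithin_le_nhds
  have hev : ∀ᶠ x in nhdsWithin (1 / L) (Set.Iio (1 / L)), 0 < x ∧ x < 1 / L := by
    have := Ioo_mem_nhdsLT (show (0 : ℝ) < 1 / L by positivity)
    filter_upwards [this] with x hx using hx
  have hz : 1 - L * (1 / L) = 0 := by field_simp; ring
  refine le_antisymm ?_ ?_
  · rw [← hz]
    exact le_of_tendsto_of_tendsto ht ht2 (hev.mono fun x hx => (hmain x hx.1 hx.2).2)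
  · exact ge_of_tendsto ht (hev.mono fun x hx => (hmain x hx.1 hx.2).1.le)

theorem squeeze_core (a g : ℕ → ℕ) (K : ℕ) (L : ℝ)
    (ha : Tendsto (fun n : ℕ => (a n : ℝ) ^ (1 / (n : ℝ))) atTop (nhds L))
    (h1 : ∀ n, g n ≤ a n) (h2 : ∀ n, a n ≤ g n * (n + 1) ^ K) :
    Tendsto (fun n : ℕ => (g n : ℝ) ^ (1 / (n : ℝ))) atTop (nhds L) := by
  have hp : Tendsto (fun n : ℕ => (((n : ℝ) + 1) ^ K) ^ (1 / (n : ℝ))) atTop (nhds 1) := by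
    have h := tendsto_rpow_div_mul_add (K : ℝ) 1 (-1) (by norm_num)
    have h' := h.comp (tendsto_atTop_add_const_right atTop (1 : ℝ)
      (tendsto_natCast_atTop_atTop (R := ℝ)))
    refine h'.congr fun n => ?_
    simp only [Function.comp]
    rw [← Real.rpow_natCast, ← Real.rpow_mul (by positivity)]
    congr 1
    ring
  have hlow : Tendsto (fun n : ℕ => (a n : ℝ) ^ (1 / (n : ℝ)) /
      (((n : ℝ) + 1) ^ K) ^ (1 / (n : ℝ))) atTop (nhds L) := by
    have := ha.div hp one_ne_zero
    rwa [div_one] at this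
  refine tendsto_of_tendsto_of_tendsto_of_le_of_le hlow ha ?_ ?_
  · intro n
    simp only
    rw [div_le_iff₀ (by positivity), ← Real.mul_rpow (by positivity) (by positivity)]
    exact Real.rpow_le_rpow (by positivity) (by exact_mod_cast h2 n) (by positivity)
  · intro n
    exact Real.rpow_le_rpow (by positivity) (by exact_mod_cast h1 n) (by positivity)

end Analysis

section Geometry

/-- Position on an axis of a point at distance `d` in refined strip `c`. -/
def P (c : ℕ) (d : ℝ) : ℝ := if Even c then (c : ℝ) / 2 + d / 2 else ((c : ℝ) + 1) / 2 - d / 2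

theorem P_le {c c' : ℕ} {d d' : ℝ} (h0 : 0 < d) (h1 : d ≤ 1) (h0' : 0 < d') (h1' : d' ≤ 1)
    (h : c < c') : P c d ≤ P c' d' := by
  have : (c : ℝ) + 1 ≤ c' := by exact_mod_cast h
  unfold P
  split_ifs <;> linarith

/-- The comparison of two positions of a word, in terms of strips. -/
def Xlt {n : ℕ} (c : Fin n → ℕ) (k k' : Fin n) : Prop :=
  c k < c k' ∨ (c k = c k' ∧ if Even (c k) then k < k' else k' < k)

theorem P_lt_iff {n : ℕ} {c : Fin n → ℕ} {d : Fin n → ℝ} (h0 : ∀ k, 0 < d k) (h1 : ∀ k, d k ≤ 1)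
    (hd : Monotone d) (hinj : Function.Injective fun k => P (c k) (d k)) (k k' : Fin n) :
    P (c k) (d k) < P (c k') (d k') ↔ Xlt c k k' := by
  unfold Xlt
  rcases eq_or_ne k k' with rfl | hne
  · simp
  have hP : P (c k) (d k) ≠ P (c k') (d k') := fun h => hne (hinj h)
  rcases lt_trichotomy (c k) (c k') with h | h | h
  · simp only [h, true_or, iff_true]
    exact lt_of_le_of_ne (P_le (h0 k) (h1 k) (h0 k') (h1 k') h) hP
  · have hlt : k < k' ↔ d k < d k' := by
      constructor
      · intro hk
        refine lt_of_le_of_ne (hd hk.le) fun he => hP (by rw [h, he])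
      · intro hk
        by_contra hc
        exact absurd (hd (not_lt.1 hc)) (not_le.2 hk)
    have hlt' : k' < k ↔ d k' < d k := by
      constructor
      · intro hk
        refine lt_of_le_of_ne (hd hk.le) fun he => hP (by rw [h, he])
      · intro hk
        by_contra hc
        exact absurd (hd (not_lt.1 hc)) (not_le.2 hk)
    simp only [h, lt_irrefl, false_or, true_and]
    rw [hlt, hlt']
    unfold P
    split_ifs
    · constructor <;> intro <;> linarith
    · constructor <;> intro <;> linarith
  · have h2 := lt_of_le_of_ne (P_le (h0 k') (h1 k') (h0 k) (h1 k) h) hP.symm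
    constructor
    · intro h3; exact absurd h3 (not_lt.2 h2.le)
    · rintro (h3 | ⟨h3, _⟩) <;> omega

/-- Standard distances. -/
def D (n : ℕ) (k : Fin n) : ℝ := ((k : ℕ) + 1 : ℝ) / (n + 1)

theorem D_pos {n : ℕ} (k : Fin n) : 0 < D n k := by unfold D; positivity

theorem D_lt {n : ℕ} (k : Fin n) : D n k < 1 := by
  unfold D
  rw [div_lt_one (by positivity)]
  have : ((k : ℕ) : ℝ) < n := by exact_mod_cast k.2
  linarith

theorem D_strictMono {n : ℕ} : StrictMono (D n) := by
  intro k k' h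
  unfold D
  have : ((k : ℕ) : ℝ) < (k' : ℕ) := by exact_mod_cast h
  gcongr

theorem P_lt_of_lt {c c' : ℕ} {d d' : ℝ} (h0 : 0 < d) (h1 : d < 1) (h0' : 0 < d') (h1' : d' < 1)
    (h : c < c') : P c d < P c' d' := by
  have : (c : ℝ) + 1 ≤ c' := by exact_mod_cast h
  unfold P
  split_ifs <;> linarith

theorem P_D_injective {n : ℕ} (c : Fin n → ℕ) : Function.Injective fun k => P (c k) (D n k) := by
  intro k k' h
  simp only at h
  rcases lt_trichotomy (c k) (c k') with hc | hc | hc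
  · exact absurd h (P_lt_of_lt (D_pos k) (D_lt k) (D_pos k') (D_lt k') hc).ne
  · apply D_strictMono.injective
    unfold P at h
    rw [hc] at h
    split_ifs at h <;> linarith
  · exact absurd h (P_lt_of_lt (D_pos k') (D_lt k') (D_pos k) (D_lt k) hc).ne'

theorem exists_rank {n : ℕ} (f : Fin n → ℝ) (hf : Function.Injective f) :
    ∃ α : Equiv.Perm (Fin n), ∀ k k', α k < α k' ↔ f k < f k' := by
  have hm : StrictMono (f ∘ Tuple.sort f) :=
    (Tuple.monotone_sort f).strictMono_of_injective (hf.comp (Tuple.sort f).injective)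
  refine ⟨(Tuple.sort f)⁻¹, fun k k' => ?_⟩
  rw [← hm.lt_iff_lt]
  simp

theorem perm_eq_of_order {n : ℕ} {α β : Equiv.Perm (Fin n)}
    (h : ∀ k k', α k < α k' ↔ β k < β k') : ∀ k, α k = β k := by
  have hs : StrictMono (fun i => β (α.symm i)) := by
    intro i j hij
    rw [← h]; simpa using hij
  have hid : (fun i => β (α.symm i)) = id :=
    StrictMono.range_inj hs strictMono_id |>.1 (by
      rw [Set.range_id]
      exact (Function.Surjective.range_eq (β.surjective.comp α.symm.surjective)))
  intro k
  have := congrFun hid (α k)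
  simpa using this.symm

variable {E : Type*} {C R : ℕ}

/-- A word and a permutation correspond. -/
def Rel (col : E → Fin C) (row : E → Fin R) {n : ℕ} (w : Fin n → E) (σ : Equiv.Perm (Fin n))
    (α β : Equiv.Perm (Fin n)) : Prop :=
  (∀ k k', α k < α k' ↔ Xlt (fun k => (col (w k) : ℕ)) k k') ∧
  (∀ k k', β k < β k' ↔ Xlt (fun k => (row (w k) : ℕ)) k k') ∧ ∀ k, σ (α k) = β k

/-- Incidence of letters (cells) with rows and columns. -/
def inc (col : E → Fin C) (row : E → Fin R) (e : E) : Fin C ⊕ Fin R → Prop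
  | Sum.inl c => col e = c
  | Sum.inr r => row e = r

theorem dep_iff (col : E → Fin C) (row : E → Fin R) (e f : E) :
    dep (inc col row) e f ↔ col e = col f ∨ row e = row f := by
  unfold dep
  rw [Sum.exists]
  refine or_congr ⟨?_, fun h => ⟨_, rfl, h.symm⟩⟩ ⟨?_, fun h => ⟨_, rfl, h.symm⟩⟩
  · rintro ⟨a, b, c⟩; exact Eq.trans b (Eq.symm c)
  · rintro ⟨a, b, c⟩; exact Eq.trans b (Eq.symm c)

theorem inc_exists (col : E → Fin C) (row : E → Fin R) (e : E) : ∃ v, inc col row e v :=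
  ⟨Sum.inl (col e), rfl⟩

theorem Xlt_congr {n : ℕ} {c c' : Fin n → ℕ} {θ : Equiv.Perm (Fin n)} (hc : ∀ k, c' (θ k) = c k)
    (hθ : ∀ k k', c k = c k' → (k < k' ↔ θ k < θ k')) (k k' : Fin n) :
    Xlt c k k' ↔ Xlt c' (θ k) (θ k') := by
  unfold Xlt
  rw [hc, hc]
  refine or_congr Iff.rfl (and_congr_right fun h => ?_)
  rw [hθ k k' h, hθ k' k h.symm]

/-- Words with the same trace give the same permutation. -/
theorem rel_unique {col : E → Fin C} {row : E → Fin R} {n : ℕ} {w w' : Fin n → E}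
    {σ σ' α α' β β' : Equiv.Perm (Fin n)} (h : Rel col row w σ α β) (h' : Rel col row w' σ' α' β')
    (ht : tr (inc col row) w = tr (inc col row) w') : σ = σ' := by
  obtain ⟨θ, h1, h2⟩ := sim_of_tr_eq (inc_exists col row) w w' ht
  have hα : ∀ k, α k = (θ.trans α') k := perm_eq_of_order fun k k' => by
    rw [h.1, Equiv.trans_apply, Equiv.trans_apply, h'.1]
    refine Xlt_congr (fun k => by rw [h1]) (fun k k' hk => h2 k k' ?_) k k'
    rw [dep_iff]; exact Or.inl (Fin.ext hk)
  have hβ : ∀ k, β k = (θ.trans β') k := perm_eq_of_order fun k k' => by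
    rw [h.2.1, Equiv.trans_apply, Equiv.trans_apply, h'.2.1]
    refine Xlt_congr (fun k => by rw [h1]) (fun k k' hk => h2 k k' ?_) k k'
    rw [dep_iff]; exact Or.inr (Fin.ext hk)
  ext1 a
  obtain ⟨k, rfl⟩ := α.surjective a
  rw [h.2.2, hβ k, hα k, Equiv.trans_apply, Equiv.trans_apply, h'.2.2]

theorem Xlt_same {n : ℕ} {c c' : Fin n → ℕ} {θ : Equiv.Perm (Fin n)} (hc : ∀ k, c' (θ k) = c k)
    (h : ∀ k k', Xlt c k k' ↔ Xlt c' (θ k) (θ k')) (k k' : Fin n) (hk : c k = c k') :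
    k < k' ↔ θ k < θ k' := by
  have h1 := h k k'
  have h2 := h k' k
  unfold Xlt at h1 h2
  rw [hc, hc] at h1 h2
  simp only [hk, lt_irrefl, false_or, true_and] at h1 h2
  split_ifs at h1 h2
  · exact h1
  · exact h2

/-- A permutation together with a gridding determines the trace. -/
theorem tr_unique {col : E → Fin C} {row : E → Fin R}
    (hcr : ∀ e f, col e = col f → row e = row f → e = f) {n : ℕ} {w w' : Fin n → E}
    {σ α α' β β' : Equiv.Perm (Fin n)} (h : Rel col row w σ α β) (h' : Rel col row w' σ α' β')
    (hcol : ∀ a, col (w (α.symm a)) = col (w' (α'.symm a)))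
    (hrow : ∀ a, row (w (β.symm a)) = row (w' (β'.symm a))) :
    tr (inc col row) w = tr (inc col row) w' := by
  have hα : ∀ k, α' ((α.trans α'.symm) k) = α k := fun k => by simp
  have hβ : ∀ k, β' ((α.trans α'.symm) k) = β k := fun k => by
    rw [← h'.2.2, ← h.2.2, hα]
  generalize α.trans α'.symm = θ at hα hβ
  have hc : ∀ k, col (w' (θ k)) = col (w k) := fun k => by
    have := hcol (α k)
    rw [← hα k, Equiv.symm_apply_apply, hα, Equiv.symm_apply_apply] at this
    exact this.symm
  have hr : ∀ k, row (w' (θ k)) = row (w k) := fun k => by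
    have := hrow (β k)
    rw [← hβ k, Equiv.symm_apply_apply, hβ, Equiv.symm_apply_apply] at this
    exact this.symm
  refine Sim.tr_eq ⟨θ, fun k => hcr _ _ (hc k) (hr k), fun k k' hd => ?_⟩
  rw [dep_iff] at hd
  rcases hd with hd | hd
  · refine Xlt_same (c := fun k => (col (w k) : ℕ)) (c' := fun k => (col (w' k) : ℕ))
      (fun k => by rw [hc]) (fun k k' => ?_) k k' (by simp only [hd])
    rw [← h.1, ← h'.1, hα, hα]
  · refine Xlt_same (c := fun k => (row (w k) : ℕ)) (c' := fun k => (row (w' k) : ℕ))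
      (fun k => by rw [hr]) (fun k k' => ?_) k k' (by simp only [hd])
    rw [← h.2.1, ← h'.2.1, hβ, hβ]

theorem mono_of_Xlt {n : ℕ} {c : Fin n → Fin C} {α : Equiv.Perm (Fin n)}
    (h : ∀ k k', α k < α k' ↔ Xlt (fun k => (c k : ℕ)) k k') :
    Monotone fun a => c (α.symm a) := by
  intro a b hab
  rcases hab.eq_or_lt with rfl | hlt
  · rfl
  · have := (h (α.symm a) (α.symm b)).1 (by simpa using hlt)
    rcases this with h1 | ⟨h1, _⟩
    · exact Fin.le_def.2 h1.le
    · exact Fin.le_def.2 h1.le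

theorem card_monotone_le (n C : ℕ) :
    Fintype.card {g : Fin n → Fin C // Monotone g} ≤ (n + 1) ^ C := by
  have hcard : Fintype.card (Fin C → Fin (n + 1)) = (n + 1) ^ C := by simp
  rw [← hcard]
  refine Fintype.card_le_of_injective (fun g c => ⟨(Finset.univ.filter fun a => g.1 a ≤ c).card,
    Nat.lt_succ_of_le ((Finset.card_le_univ _).trans (by simp))⟩) ?_
  have key : ∀ (g : Fin n → Fin C), Monotone g → ∀ a c,
      g a ≤ c ↔ (a : ℕ) < (Finset.univ.filter fun a => g a ≤ c).card := by
    intro g hg a c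
    constructor
    · intro h
      have hsub : Finset.Iic a ⊆ Finset.univ.filter fun a => g a ≤ c := by
        intro b hb
        simp only [Finset.mem_Iic] at hb
        simp only [Finset.mem_filter, Finset.mem_univ, true_and]
        exact (hg hb).trans h
      have := Finset.card_le_card hsub
      rw [Fin.card_Iic] at this
      omega
    · intro h
      by_contra hc
      have hsub : (Finset.univ.filter fun a => g a ≤ c) ⊆ Finset.Iio a := by
        intro b hb
        simp only [Finset.mem_filter, Finset.mem_univ, true_and] at hb
        simp only [Finset.mem_Iio]
        by_contra hba
        exact hc ((hg (not_lt.1 hba)).trans hb)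
      have := Finset.card_le_card hsub
      rw [Fin.card_Iio] at this
      omega
  intro g g' h
  apply Subtype.ext
  funext a
  have h' : ∀ c, (Finset.univ.filter fun a => g.1 a ≤ c).card
      = (Finset.univ.filter fun a => g'.1 a ≤ c).card := fun c => by
    have := congrFun h c
    exact Fin.mk.inj_iff.1 this
  apply le_antisymm
  · rw [key g.1 g.2, h', ← key g'.1 g'.2]
  · rw [key g'.1 g'.2, ← h', ← key g.1 g.2]

/-- Abstract sandwich between the number of permutations and the number of traces. -/
theorem sandwich [Fintype E] {col : E → Fin C} {row : E → Fin R}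
    (hcr : ∀ e f, col e = col f → row e = row f → e = f) {n : ℕ}
    (G : Equiv.Perm (Fin n) → Prop)
    (hG1 : ∀ σ, G σ → ∃ (w : Fin n → E) (α β : Equiv.Perm (Fin n)), Rel col row w σ α β)
    (hG2 : ∀ w : Fin n → E, ∃ σ α β, G σ ∧ Rel col row w σ α β) :
    Nat.card {σ // G σ} ≤ (T (inc col row) n).card ∧
    (T (inc col row) n).card ≤ Nat.card {σ // G σ} * (n + 1) ^ (C + R) := by
  rw [Nat.card_eq_fintype_card]
  constructor
  · choose w α β hw using hG1
    rw [← Fintype.card_coe]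
    refine Fintype.card_le_of_injective (fun σ => ⟨tr (inc col row) (w σ.1 σ.2), tr_mem_T _ _⟩) ?_
    intro σ σ' h
    exact Subtype.ext (rel_unique (hw σ.1 σ.2) (hw σ'.1 σ'.2) (Subtype.ext_iff.1 h))
  · have h1 : ∀ ρ : T (inc col row) n, ∃ w : Fin n → E, tr (inc col row) w = ρ.1 := by
      rintro ⟨ρ, hρ⟩
      simpa [T] using hρ
    choose w hw using h1
    choose σ α β hσ hrel using hG2
    have hcard : (T (inc col row) n).card ≤ Fintype.card ({σ // G σ} ×
        ({g : Fin n → Fin C // Monotone g} × {g : Fin n → Fin R // Monotone g})) := by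
      rw [← Fintype.card_coe]
      refine Fintype.card_le_of_injective (fun ρ => (⟨σ (w ρ), hσ (w ρ)⟩,
        ⟨fun a => col (w ρ ((α (w ρ)).symm a)), mono_of_Xlt (hrel (w ρ)).1⟩,
        ⟨fun a => row (w ρ ((β (w ρ)).symm a)), mono_of_Xlt (hrel (w ρ)).2.1⟩)) ?_
      intro ρ ρ' h
      simp only [Prod.mk.injEq, Subtype.mk.injEq] at h
      obtain ⟨h1, h2, h3⟩ := h
      apply Subtype.ext
      rw [← hw ρ, ← hw ρ']
      have hr := hrel (w ρ')
      rw [← h1] at hr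
      exact tr_unique hcr (hrel (w ρ)) hr (fun a => congrFun h2 a) (fun a => congrFun h3 a)
    refine hcard.trans ?_
    rw [Fintype.card_prod, Fintype.card_prod, pow_add]
    exact Nat.mul_le_mul_left _ (Nat.mul_le_mul (card_monotone_le n C) (card_monotone_le n R))

end Geometry

section Concrete

variable {t u : ℕ}

/-- The nonzero cells of the double refinement. -/
abbrev Cell (M : Fin t → Fin u → ℤ) : Type :=
  {p : Fin (2 * t) × Fin (2 * u) // doubleRefine M p.1 p.2 ≠ 0}

/-- Column of a cell. -/
def colC (M : Fin t → Fin u → ℤ) (e : Cell M) : Fin (2 * t) := e.1.1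

/-- Row of a cell. -/
def rowC (M : Fin t → Fin u → ℤ) (e : Cell M) : Fin (2 * u) := e.1.2

theorem cell_ext (M : Fin t → Fin u → ℤ) (e f : Cell M) (h1 : colC M e = colC M f)
    (h2 : rowC M e = rowC M f) : e = f :=
  Subtype.ext (Prod.ext h1 h2)

theorem doubleRefine_ne_zero_iff (M : Fin t → Fin u → ℤ) (i : Fin (2 * t)) (j : Fin (2 * u)) :
    doubleRefine M i j ≠ 0 ↔
      (M ⟨(i : ℕ) / 2, by have := i.isLt; omega⟩ ⟨(j : ℕ) / 2, by have := j.isLt; omega⟩ = 1 ∧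
        (i : ℕ) % 2 = (j : ℕ) % 2) ∨
      (M ⟨(i : ℕ) / 2, by have := i.isLt; omega⟩ ⟨(j : ℕ) / 2, by have := j.isLt; omega⟩ = -1 ∧
        (i : ℕ) % 2 ≠ (j : ℕ) % 2) := by
  unfold doubleRefine
  generalize M _ _ = m
  split_ifs <;> simp_all

theorem P_even (i : ℕ) (d : ℝ) : P (2 * i) d = i + d / 2 := by
  unfold P
  rw [if_pos (even_two_mul i)]
  push_cast; ring

theorem P_odd (i : ℕ) (d : ℝ) : P (2 * i + 1) d = i + 1 - d / 2 := by
  unfold P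
  rw [if_neg (by simp)]
  push_cast; ring

/-- The cell with given half indices. -/
theorem exists_cell (M : Fin t → Fin u → ℤ) (i : Fin t) (j : Fin u) (a b : ℕ) (ha : a < 2)
    (hb : b < 2) (h : (M i j = 1 ∧ a = b) ∨ (M i j = -1 ∧ a ≠ b)) :
    ∃ e : Cell M, (colC M e : ℕ) = 2 * i + a ∧ (rowC M e : ℕ) = 2 * j + b := by
  refine ⟨⟨(⟨2 * i + a, by have := i.2; omega⟩, ⟨2 * j + b, by have := j.2; omega⟩), ?_⟩, rfl, rfl⟩
  rw [doubleRefine_ne_zero_iff]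
  have e1 : (⟨(2 * (i : ℕ) + a) / 2, by have := i.isLt; omega⟩ : Fin t) = i := by
    apply Fin.ext; simp only; omega
  have e2 : (⟨(2 * (j : ℕ) + b) / 2, by have := j.isLt; omega⟩ : Fin u) = j := by
    apply Fin.ext; simp only; omega
  simp only [e1, e2]
  have e3 : (2 * (i : ℕ) + a) % 2 = a := by omega
  have e4 : (2 * (j : ℕ) + b) % 2 = b := by omega
  rw [e3, e4]
  exact h

theorem exists_cell_of_mem (M : Fin t → Fin u → ℤ) {p : ℝ × ℝ} (hp : p ∈ stdFigure M) :
    ∃ (e : Cell M) (d : ℝ), 0 < d ∧ d ≤ 1 ∧ p = (P (colC M e) d, P (rowC M e) d) := by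
  obtain ⟨i, j, s, h0, h1, ⟨hm, rfl⟩ | ⟨hm, rfl⟩⟩ := hp
  · rcases le_total s (1 / 2) with hs | hs
    · obtain ⟨e, hc, hr⟩ := exists_cell M i j 0 0 (by norm_num) (by norm_num) (Or.inl ⟨hm, rfl⟩)
      refine ⟨e, 2 * s, by linarith, by linarith, ?_⟩
      rw [hc, hr, add_zero, add_zero, P_even, P_even]
      ext <;> simp
    · obtain ⟨e, hc, hr⟩ := exists_cell M i j 1 1 (by norm_num) (by norm_num) (Or.inl ⟨hm, rfl⟩)
      refine ⟨e, 2 * (1 - s), by linarith, by linarith, ?_⟩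
      rw [hc, hr, P_odd, P_odd]
      ext <;> simp only <;> ring
  · rcases le_total s (1 / 2) with hs | hs
    · obtain ⟨e, hc, hr⟩ := exists_cell M i j 0 1 (by norm_num) (by norm_num)
        (Or.inr ⟨hm, by norm_num⟩)
      refine ⟨e, 2 * s, by linarith, by linarith, ?_⟩
      rw [hc, hr, add_zero, P_even, P_odd]
      ext <;> simp only <;> ring
    · obtain ⟨e, hc, hr⟩ := exists_cell M i j 1 0 (by norm_num) (by norm_num)
        (Or.inr ⟨hm, by norm_num⟩)
      refine ⟨e, 2 * (1 - s), by linarith, by linarith, ?_⟩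
      rw [hc, hr, add_zero, P_odd, P_even]
      ext <;> simp only <;> ring

theorem mem_of_cell (M : Fin t → Fin u → ℤ) (e : Cell M) {d : ℝ} (h0 : 0 < d) (h1 : d < 1) :
    (P (colC M e) d, P (rowC M e) d) ∈ stdFigure M := by
  obtain ⟨⟨i, j⟩, h⟩ := e
  simp only [colC, rowC]
  rw [doubleRefine_ne_zero_iff] at h
  dsimp only at h
  have hi : (i : ℕ) = 2 * ((i : ℕ) / 2) + (i : ℕ) % 2 := by omega
  have hj : (j : ℕ) = 2 * ((j : ℕ) / 2) + (j : ℕ) % 2 := by omega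
  have hi2 : (i : ℕ) % 2 = 0 ∨ (i : ℕ) % 2 = 1 := by omega
  have hj2 : (j : ℕ) % 2 = 0 ∨ (j : ℕ) % 2 = 1 := by omega
  rcases h with ⟨hm, hpar⟩ | ⟨hm, hpar⟩
  · rcases hi2 with hi2 | hi2
    · refine ⟨_, _, d / 2, by linarith, by linarith, Or.inl ⟨hm, ?_⟩⟩
      have e1 : P i d = ((i : ℕ) / 2 : ℕ) + d / 2 := by
        conv_lhs => rw [hi, hi2, add_zero, P_even]
      have e2 : P j d = ((j : ℕ) / 2 : ℕ) + d / 2 := by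
        conv_lhs => rw [hj, ← hpar, hi2, add_zero, P_even]
      rw [e1, e2]
    · refine ⟨_, _, 1 - d / 2, by linarith, by linarith, Or.inl ⟨hm, ?_⟩⟩
      have e1 : P i d = ((i : ℕ) / 2 : ℕ) + 1 - d / 2 := by
        conv_lhs => rw [hi, hi2, P_odd]
      have e2 : P j d = ((j : ℕ) / 2 : ℕ) + 1 - d / 2 := by
        conv_lhs => rw [hj, ← hpar, hi2, P_odd]
      rw [e1, e2]
      ext <;> simp only <;> ring
  · rcases hi2 with hi2 | hi2
    · have hj3 : (j : ℕ) % 2 = 1 := by omega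
      refine ⟨_, _, d / 2, by linarith, by linarith, Or.inr ⟨hm, ?_⟩⟩
      have e1 : P i d = ((i : ℕ) / 2 : ℕ) + d / 2 := by
        conv_lhs => rw [hi, hi2, add_zero, P_even]
      have e2 : P j d = ((j : ℕ) / 2 : ℕ) + 1 - d / 2 := by
        conv_lhs => rw [hj, hj3, P_odd]
      rw [e1, e2]
    · have hj3 : (j : ℕ) % 2 = 0 := by omega
      refine ⟨_, _, 1 - d / 2, by linarith, by linarith, Or.inr ⟨hm, ?_⟩⟩
      have e1 : P i d = ((i : ℕ) / 2 : ℕ) + 1 - d / 2 := by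
        conv_lhs => rw [hi, hi2, P_odd]
      have e2 : P j d = ((j : ℕ) / 2 : ℕ) + d / 2 := by
        conv_lhs => rw [hj, hj3, add_zero, P_even]
      rw [e1, e2]
      ext <;> simp only <;> ring

theorem geom_to_word (M : Fin t → Fin u → ℤ) {n : ℕ} (σ : Equiv.Perm (Fin n))
    (h : InGeomClass M σ) :
    ∃ (w : Fin n → Cell M) (α β : Equiv.Perm (Fin n)), Rel (colC M) (rowC M) w σ α β := by
  obtain ⟨f, hf, hx, hy⟩ := h
  choose e d hd0 hd1 hfe using fun p => exists_cell_of_mem M (hf p)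
  have hxm : StrictMono fun a => (f a).1 := hx
  have hyinj : Function.Injective fun a => (f a).2 := by
    intro a b hab
    simp only at hab
    have h1 := hy a b
    have h2 := hy b a
    rw [hab] at h1 h2
    simp only [lt_irrefl, false_iff, not_lt] at h1 h2
    exact σ.injective (le_antisymm h2 h1)
  set τ := Tuple.sort d
  have hτ : Monotone fun k => d (τ k) := Tuple.monotone_sort d
  refine ⟨fun k => e (τ k), τ, τ.trans σ, ?_, ?_, fun k => rfl⟩
  · intro k k'
    rw [← P_lt_iff (d := fun k => d (τ k)) (fun k => hd0 _) (fun k => hd1 _) hτ ?_ k k']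
    · rw [← hxm.lt_iff_lt]
      simp only
      rw [hfe (τ k), hfe (τ k')]
    · intro a b hab
      apply τ.injective
      apply hxm.injective
      simp only at hab ⊢
      rw [hfe (τ a), hfe (τ b)]
      exact hab
  · intro k k'
    rw [← P_lt_iff (d := fun k => d (τ k)) (fun k => hd0 _) (fun k => hd1 _) hτ ?_ k k']
    · rw [Equiv.trans_apply, Equiv.trans_apply, ← hy, hfe (τ k), hfe (τ k')]
    · intro a b hab
      apply τ.injective
      apply hyinj
      simp only at hab ⊢
      rw [hfe (τ a), hfe (τ b)]
      exact hab

theorem word_to_geom (M : Fin t → Fin u → ℤ) {n : ℕ} (w : Fin n → Cell M) :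
    ∃ σ α β : Equiv.Perm (Fin n), InGeomClass M σ ∧ Rel (colC M) (rowC M) w σ α β := by
  obtain ⟨α, hα⟩ := exists_rank _ (P_D_injective (fun k => (colC M (w k) : ℕ)))
  obtain ⟨β, hβ⟩ := exists_rank _ (P_D_injective (fun k => (rowC M (w k) : ℕ)))
  have hα' : ∀ k k', α k < α k' ↔ Xlt (fun k => (colC M (w k) : ℕ)) k k' := fun k k' => by
    rw [hα]
    exact P_lt_iff (c := fun k => (colC M (w k) : ℕ)) D_pos (fun k => (D_lt k).le) D_strictMono.monotone
      (P_D_injective _) k k'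
  have hβ' : ∀ k k', β k < β k' ↔ Xlt (fun k => (rowC M (w k) : ℕ)) k k' := fun k k' => by
    rw [hβ]
    exact P_lt_iff (c := fun k => (rowC M (w k) : ℕ)) D_pos (fun k => (D_lt k).le) D_strictMono.monotone
      (P_D_injective _) k k'
  refine ⟨α.symm.trans β, α, β, ?_, hα', hβ', fun k => by simp⟩
  refine ⟨fun a => (P (colC M (w (α.symm a))) (D n (α.symm a)),
    P (rowC M (w (α.symm a))) (D n (α.symm a))), fun p => mem_of_cell M _ (D_pos _) (D_lt _),
    fun a b hab => ?_, fun a b => ?_⟩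
  · exact (hα (α.symm a) (α.symm b)).1 (by simpa using hab)
  · exact (hβ (α.symm a) (α.symm b)).symm

theorem geom_sandwich (M : Fin t → Fin u → ℤ) (n : ℕ) :
    geomCount M n ≤ (T (inc (colC M) (rowC M)) n).card ∧
    (T (inc (colC M) (rowC M)) n).card ≤ geomCount M n * (n + 1) ^ (2 * t + 2 * u) :=
  sandwich (cell_ext M) (InGeomClass M) (geom_to_word M) (word_to_geom M)

/-- A cell as an edge of the row-column graph. -/
def edgeOf (M : Fin t → Fin u → ℤ) : Cell M ↪ Sym2 (Fin (2 * t) ⊕ Fin (2 * u)) where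
  toFun e := s(Sum.inl (colC M e), Sum.inr (rowC M e))
  inj' := by
    intro e f h
    simp only [Sym2.eq_iff, Sum.inl.injEq, Sum.inr.injEq, reduceCtorEq, and_false, or_false] at h
    exact cell_ext M e f h.1 h.2

theorem edgeOf_apply (M : Fin t → Fin u → ℤ) (e : Cell M) :
    edgeOf M e = s(Sum.inl (colC M e), Sum.inr (rowC M e)) := rfl

theorem mem_edgeOf (M : Fin t → Fin u → ℤ) (e : Cell M) (v : Fin (2 * t) ⊕ Fin (2 * u)) :
    v ∈ edgeOf M e ↔ inc (colC M) (rowC M) e v := by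
  rcases v with c | r
  · simp [edgeOf_apply, inc, eq_comm]
  · simp [edgeOf_apply, inc, eq_comm]

theorem edge_iff (M : Fin t → Fin u → ℤ) (x : Sym2 (Fin (2 * t) ⊕ Fin (2 * u))) :
    x ∈ (rowColGraph (doubleRefine M)).edgeSet ↔ ∃ e, edgeOf M e = x := by
  induction x using Sym2.ind with
  | _ a b =>
  rw [SimpleGraph.mem_edgeSet, rowColGraph, SimpleGraph.fromRel_adj]
  constructor
  · rintro ⟨_, ⟨i, j, rfl, rfl, h⟩ | ⟨i, j, rfl, rfl, h⟩⟩
    · exact ⟨⟨(i, j), h⟩, rfl⟩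
    · exact ⟨⟨(i, j), h⟩, Sym2.eq_swap⟩
  · rintro ⟨e, he⟩
    rw [edgeOf_apply, Sym2.eq_iff] at he
    rcases he with ⟨rfl, rfl⟩ | ⟨rfl, rfl⟩
    · exact ⟨by simp, Or.inl ⟨_, _, rfl, rfl, e.2⟩⟩
    · exact ⟨by simp, Or.inr ⟨_, _, rfl, rfl, e.2⟩⟩

theorem matchingNumber_eq (M : Fin t → Fin u → ℤ) (k : ℕ) :
    matchingNumber (rowColGraph (doubleRefine M)) k =
      ((Finset.univ.filter (fun S : Finset (Cell M) => Indep (inc (colC M) (rowC M)) S)).filter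
        (fun S => S.card = k)).card := by
  unfold matchingNumber
  rw [← Fintype.card_coe, ← Nat.card_eq_fintype_card]
  symm
  have hmem : ∀ S : Finset (Cell M), S ∈ ((Finset.univ.filter (fun S : Finset (Cell M) =>
      Indep (inc (colC M) (rowC M)) S)).filter (fun S => S.card = k)) ↔
      Indep (inc (colC M) (rowC M)) S ∧ S.card = k := by
    intro S; simp
  refine Nat.card_eq_of_bijective (fun S => ⟨S.1.map (edgeOf M), ?_, ?_, ?_⟩) ⟨?_, ?_⟩
  · rw [Finset.card_map]
    exact ((hmem S.1).1 S.2).2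
  · intro x hx
    obtain ⟨e, _, rfl⟩ := Finset.mem_map.1 hx
    exact (edge_iff M _).2 ⟨e, rfl⟩
  · intro x hx y hy hne v hv
    obtain ⟨e, he, rfl⟩ := Finset.mem_map.1 hx
    obtain ⟨f, hf, rfl⟩ := Finset.mem_map.1 hy
    rw [mem_edgeOf, mem_edgeOf] at hv
    exact ((hmem S.1).1 S.2).1 e he f hf (fun h => hne (by rw [h])) ⟨v, hv⟩
  · intro S S' h
    exact Subtype.ext (Finset.map_injective _ (Subtype.mk.inj h))
  · rintro ⟨s, h1, h2, h3⟩
    have hmap : (Finset.univ.filter (fun e => edgeOf M e ∈ s)).map (edgeOf M) = s := by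
      ext x
      simp only [Finset.mem_map, Finset.mem_filter, Finset.mem_univ, true_and]
      constructor
      · rintro ⟨e, he, rfl⟩; exact he
      · intro hx
        obtain ⟨e, rfl⟩ := (edge_iff M x).1 (h2 x hx)
        exact ⟨e, hx, rfl⟩
    refine ⟨⟨Finset.univ.filter (fun e => edgeOf M e ∈ s), (hmem _).2 ⟨?_, ?_⟩⟩,
      Subtype.ext hmap⟩
    · rintro e he f hf hne ⟨v, hv⟩
      simp only [Finset.mem_filter, Finset.mem_univ, true_and] at he hf
      rw [← mem_edgeOf, ← mem_edgeOf] at hv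
      exact h3 _ he _ hf (fun h => hne ((edgeOf M).injective h)) v hv
    · rw [← Finset.card_map (edgeOf M), hmap, h1]

theorem indep_card_le (M : Fin t → Fin u → ℤ) (S : Finset (Cell M))
    (hS : Indep (inc (colC M) (rowC M)) S) : S.card ≤ t + u := by
  have h1 : S.card ≤ 2 * t := by
    have := Finset.card_le_card_of_injOn (s := S) (t := Finset.univ) (colC M)
      (fun _ _ => Finset.mem_univ _) (by
        intro e he f hf h
        by_contra hne
        exact hS e he f hf hne ((dep_iff _ _ _ _).2 (Or.inl h)))
    simpa using this
  have h2 : S.card ≤ 2 * u := by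
    have := Finset.card_le_card_of_injOn (s := S) (t := Finset.univ) (rowC M)
      (fun _ _ => Finset.mem_univ _) (by
        intro e he f hf h
        by_contra hne
        exact hS e he f hf hne ((dep_iff _ _ _ _).2 (Or.inr h)))
    simpa using this
  omega

theorem eval_matchingPoly (M : Fin t → Fin u → ℤ) (x : ℝ) :
    (matchingPoly (rowColGraph (doubleRefine M))).eval x =
      ∑ S ∈ Finset.univ.filter (fun S : Finset (Cell M) => Indep (inc (colC M) (rowC M)) S),
        (-1 : ℝ) ^ S.card * x ^ (2 * (t + u) - 2 * S.card) := by
  have hN : Fintype.card (Fin (2 * t) ⊕ Fin (2 * u)) = 2 * (t + u) := by simp; ring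
  unfold matchingPoly
  rw [hN, Polynomial.eval_finsetSum]
  rw [← Finset.sum_fiberwise_of_maps_to (s := Finset.univ.filter
    (fun S : Finset (Cell M) => Indep (inc (colC M) (rowC M)) S)) (g := fun S => S.card)
    (t := Finset.range (2 * (t + u) / 2 + 1))]
  · refine Finset.sum_congr rfl fun k _ => ?_
    rw [matchingNumber_eq]
    have : ∀ S ∈ (Finset.univ.filter (fun S : Finset (Cell M) =>
        Indep (inc (colC M) (rowC M)) S)).filter (fun S => S.card = k),
        (-1 : ℝ) ^ S.card * x ^ (2 * (t + u) - 2 * S.card)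
          = (-1 : ℝ) ^ k * x ^ (2 * (t + u) - 2 * k) := by
      intro S hS
      rw [(Finset.mem_filter.1 hS).2]
    rw [Finset.sum_congr rfl this, Finset.sum_const, nsmul_eq_mul]
    simp only [Polynomial.eval_mul, Polynomial.eval_C, Polynomial.eval_pow, Polynomial.eval_X]
    ring
  · intro S hS
    have := indep_card_le M S (Finset.mem_filter.1 hS).2
    simp only [Finset.mem_range]
    omega

theorem eval_matchingPoly' (M : Fin t → Fin u → ℤ) {x : ℝ} (hx : 0 < x) :
    (matchingPoly (rowColGraph (doubleRefine M))).eval x = x ^ (2 * (t + u)) *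
      ∑ S ∈ Finset.univ.filter (fun S : Finset (Cell M) => Indep (inc (colC M) (rowC M)) S),
        (-1 : ℝ) ^ S.card * (1 / x ^ 2) ^ S.card := by
  rw [eval_matchingPoly, Finset.mul_sum]
  refine Finset.sum_congr rfl fun S hS => ?_
  have := indep_card_le M S (Finset.mem_filter.1 hS).2
  have h : x ^ (2 * (t + u)) = x ^ (2 * (t + u) - 2 * S.card) * (x ^ 2) ^ S.card := by
    rw [← pow_mul, ← pow_add]; congr 1; omega
  rw [h, one_div, inv_pow]
  field_simp

end Concrete

end GGR

/-- The matching polynomial of `G(M^{×2})` has a greatest real root `μ`, and the growth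
rate of `Geom(M)` exists and equals `μ²`. -/
theorem geom_growth_rate {t u : ℕ} (ht : 1 ≤ t) (hu : 1 ≤ u)
    (M : Fin t → Fin u → ℤ) (hM : ∀ i j, M i j = 0 ∨ M i j = 1 ∨ M i j = -1) :
    ∃ μ : ℝ,
      IsGreatest {x : ℝ | (matchingPoly (rowColGraph (doubleRefine M))).IsRoot x} μ ∧
      Tendsto (fun n : ℕ => (geomCount M n : ℝ) ^ (1 / (n : ℝ))) atTop (nhds (μ ^ 2)) := by
  have hS := GGR.geom_sandwich M
  rcases isEmpty_or_nonempty (GGR.Cell M) with hE | hE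
  · refine ⟨0, ⟨?_, ?_⟩, ?_⟩
    · simp only [Set.mem_ofPred_eq, Polynomial.IsRoot.def]
      rw [GGR.eval_matchingPoly]
      refine Finset.sum_eq_zero fun S _ => ?_
      rw [Finset.eq_empty_of_isEmpty S, Finset.card_empty, zero_pow (by omega), mul_zero]
    · intro x hx
      simp only [Set.mem_ofPred_eq, Polynomial.IsRoot.def] at hx
      by_contra hc
      rw [GGR.eval_matchingPoly' M (not_le.1 hc)] at hx
      have hone : ∀ S ∈ Finset.univ.filter (fun S : Finset (GGR.Cell M) =>
          GGR.Indep (GGR.inc (GGR.colC M) (GGR.rowC M)) S),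
          (-1 : ℝ) ^ S.card * (1 / x ^ 2) ^ S.card = 1 := by
        intro S _
        rw [Finset.eq_empty_of_isEmpty S]; simp
      rw [Finset.sum_congr rfl hone, Finset.sum_const, nsmul_eq_mul, mul_one] at hx
      have hne : (Finset.univ.filter (fun S : Finset (GGR.Cell M) =>
          GGR.Indep (GGR.inc (GGR.colC M) (GGR.rowC M)) S)).card ≠ 0 := by
        rw [Finset.card_ne_zero]
        refine ⟨∅, Finset.mem_filter.2 ⟨Finset.mem_univ _, ?_⟩⟩
        intro e
        exact (hE.false e).elim
      have hxp : x ^ (2 * (t + u)) ≠ 0 := (pow_pos (not_le.1 hc) _).ne'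
      rcases mul_eq_zero.1 hx with h | h
      · exact hxp h
      · exact hne (by exact_mod_cast h)
    · have h0 : ∀ n : ℕ, 0 < n → geomCount M n = 0 := by
        intro n hn
        have h1 := (hS n).1
        have h2 : (GGR.T (GGR.inc (GGR.colC M) (GGR.rowC M)) n).card = 0 := by
          exact GGR.T_empty _ hn
        omega
      refine tendsto_const_nhds.congr' ?_
      filter_upwards [eventually_gt_atTop 0] with n hn
      rw [h0 n hn, Nat.cast_zero, Real.zero_rpow (by positivity)]
      norm_num
  · obtain ⟨L, hL, hlim, hroot, hpos⟩ := GGR.analytic_core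
      (Finset.univ.filter (fun S : Finset (GGR.Cell M) =>
          GGR.Indep (GGR.inc (GGR.colC M) (GGR.rowC M)) S)) Finset.card
      (fun n => (GGR.T (GGR.inc (GGR.colC M) (GGR.rowC M)) n).card)
      (GGR.T_pos _) (GGR.T_submul _) (GGR.cartier_foata (GGR.inc_exists _ _))
    have hsq : Real.sqrt L ^ 2 = L := Real.sq_sqrt hL.le
    refine ⟨Real.sqrt L, ⟨?_, ?_⟩, ?_⟩
    · simp only [Set.mem_ofPred_eq, Polynomial.IsRoot.def]
      rw [GGR.eval_matchingPoly' M (Real.sqrt_pos.2 hL), hsq, hroot, mul_zero]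
    · intro x hx
      simp only [Set.mem_ofPred_eq, Polynomial.IsRoot.def] at hx
      by_contra hc
      have hc' := not_le.1 hc
      have hx0 : 0 < x := (Real.sqrt_pos.2 hL).trans hc'
      rw [GGR.eval_matchingPoly' M hx0] at hx
      have hlt : 1 / x ^ 2 < 1 / L := by
        apply one_div_lt_one_div_of_lt hL
        rw [← hsq]
        exact pow_lt_pow_left₀ hc' (Real.sqrt_nonneg _) (by norm_num)
      have := hpos (1 / x ^ 2) (by positivity) hlt
      exact (mul_pos (pow_pos hx0 _) this).ne' hx
    · rw [hsq]
      exact GGR.squeeze_core _ _ (2 * t + 2 * u) L hlim (fun n => (hS n).1) (fun n => (hS n).2)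
end
end
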